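/- (Topological Tverberg theorem) Let d ≥ 1 and let r be a prime power, and set N = (d+1)(r-1). For every continuous map f from the standard N-dimensional simplex Δ_N (the set of points in ℝ^{N+1} with nonnegative coordinates summing to 1, with N+1 vertices) to ℝ^d, there exist r pairwise disjoint subsets S_1, …, S_r of the vertex set of Δ_N and a point p ∈ ℝ^d such that p lies in the image under f of the face of Δ_N spanned by S_i, for every i = 1, …, r. Here the face spanned by a subset S of vertices is the set of points of Δ_N whose coordinates outside S all vanish. -/

import Mathlib

open Finset

/-- The sign `(-1) ^ n`, for an integer `n`, as an element of `ZMod p`. -/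
def intSign (p : ℕ) (n : ℤ) : ZMod p := ((n.negOnePow : ℤ) : ZMod p)

@[simp] theorem intSign_zero (p : ℕ) : intSign p 0 = 1 := by simp [intSign]

theorem intSign_add (p : ℕ) (m n : ℤ) : intSign p (m + n) = intSign p m * intSign p n := by
  simp [intSign, Int.negOnePow_add]

@[simp] theorem intSign_one (p : ℕ) : intSign p 1 = -1 := by simp [intSign]

theorem intSign_sub_one (p : ℕ) (n : ℤ) : intSign p (n - 1) = -intSign p n := by
  have h := intSign_add p (n - 1) 1
  rw [sub_add_cancel, intSign_one] at h
  rw [h]; ring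

@[simp] theorem intSign_mul_self (p : ℕ) (n : ℤ) : intSign p n * intSign p n = 1 := by
  rw [← intSign_add]
  simp [intSign, Int.negOnePow_even (n + n) (Even.add_self n)]

theorem intSign_of_even (p : ℕ) {n : ℤ} (h : Even n) : intSign p n = 1 := by
  simp [intSign, Int.negOnePow_even n h]

theorem intSign_of_odd (p : ℕ) {n : ℤ} (h : Odd n) : intSign p n = -1 := by
  simp [intSign, Int.negOnePow_odd n h]

/-- An ungraded chain complex over `ZMod p` with an action of the elementary abelian group
`(ZMod p) ^ k`. -/
structure EquivComplex (p k : ℕ) (M : Type*) [AddCommGroup M] [Module (ZMod p) M] where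
  /-- The differential. -/
  d : M →ₗ[ZMod p] M
  /-- The action. -/
  act : (Fin k → ZMod p) → M →ₗ[ZMod p] M
  d_d : ∀ x, d (d x) = 0
  act_zero : ∀ x, act 0 x = x
  act_add : ∀ g h x, act (g + h) x = act g (act h x)
  d_act : ∀ g x, d (act g x) = act g (d x)

namespace EquivComplex

variable {p k : ℕ} {M : Type*} [AddCommGroup M] [Module (ZMod p) M]
  (C : EquivComplex p k M)

theorem act_comm (g h : Fin k → ZMod p) (x : M) : C.act g (C.act h x) = C.act h (C.act g x) := by
  rw [← C.act_add, ← C.act_add, add_comm]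

variable [NeZero p]

/-- The differentials of the periodic resolution of `ZMod p` in the `i`-th direction: the norm
element in even degrees, and `g - 1` in odd degrees. -/
def per (i : Fin k) (a : ℤ) : M →ₗ[ZMod p] M :=
  if Even a then ∑ t : ZMod p, C.act (Pi.single i t) else C.act (Pi.single i 1) - LinearMap.id

theorem per_of_even (i : Fin k) {a : ℤ} (h : Even a) (x : M) :
    C.per i a x = ∑ t : ZMod p, C.act (Pi.single i t) x := by
  simp [per, h]

theorem per_of_odd (i : Fin k) {a : ℤ} (h : Odd a) (x : M) :
    C.per i a x = C.act (Pi.single i 1) x - x := by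
  simp [per, Int.not_even_iff_odd.2 h]

theorem d_per (i : Fin k) (a : ℤ) (x : M) : C.d (C.per i a x) = C.per i a (C.d x) := by
  rcases Int.even_or_odd a with h | h
  · simp [per_of_even, h, C.d_act]
  · simp [per_of_odd, h, C.d_act]

theorem act_per (g : Fin k → ZMod p) (i : Fin k) (a : ℤ) (x : M) :
    C.act g (C.per i a x) = C.per i a (C.act g x) := by
  rcases Int.even_or_odd a with h | h
  · simp [per_of_even, h, C.act_comm g]
  · simp [per_of_odd, h, C.act_comm g]

theorem per_comm (i j : Fin k) (a b : ℤ) (x : M) :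
    C.per i a (C.per j b x) = C.per j b (C.per i a x) := by
  rcases Int.even_or_odd a with h | h
  · simp [per_of_even, h, C.act_per]
  · simp [per_of_odd, h, C.act_per]

theorem per_per_sub_one (i : Fin k) (a : ℤ) (x : M) : C.per i a (C.per i (a - 1) x) = 0 := by
  have key : ∑ t : ZMod p, C.act (Pi.single i t) (C.act (Pi.single i 1) x - x) = 0 := by
    simp only [map_sub, ← C.act_add, ← Pi.single_add, sum_sub_distrib]
    rw [sub_eq_zero]
    exact Equiv.sum_comp (Equiv.addRight (1 : ZMod p)) fun t => C.act (Pi.single i t) x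
  rcases Int.even_or_odd a with h | h
  · have h' : Odd (a - 1) := h.sub_odd odd_one
    rw [C.per_of_odd i h', C.per_of_even i h, key]
  · have h' : Even (a - 1) := h.sub_odd odd_one
    rw [C.per_comm, C.per_of_odd i h, C.per_of_even i h', key]

theorem per_eq_zero_of_fixed (i : Fin k) (a : ℤ) {x : M} (hx : ∀ g, C.act g x = x) :
    C.per i a x = 0 := by
  rcases Int.even_or_odd a with h | h
  · rw [C.per_of_even i h]
    simp only [hx, sum_const, card_univ, ZMod.card]
    rw [← Nat.cast_smul_eq_nsmul (ZMod p)]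
    simp
  · simp [C.per_of_odd i h, hx]

/-- The total differential on families indexed by `ℤ ^ k`. It encodes equivariant maps from the
tensor product of `k` periodic resolutions. -/
def tot : ((Fin k → ℤ) → M) →ₗ[ZMod p] ((Fin k → ℤ) → M) :=
  LinearMap.pi fun α =>
    intSign p (∑ i, α i) • C.d ∘ₗ LinearMap.proj α +
      ∑ i, intSign p (∑ j ∈ Iio i, α j) •
        C.per i (α i) ∘ₗ LinearMap.proj (α - Pi.single i 1)

theorem tot_apply (y : (Fin k → ℤ) → M) (α : Fin k → ℤ) :
    C.tot y α = intSign p (∑ i, α i) • C.d (y α) +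
      ∑ i, intSign p (∑ j ∈ Iio i, α j) • C.per i (α i) (y (α - Pi.single i 1)) := by
  simp [tot]

theorem sum_sub_single (α : Fin k → ℤ) (i : Fin k) :
    ∑ j, (α - Pi.single i 1 : Fin k → ℤ) j = ∑ j, α j - 1 := by
  simp [sum_sub_distrib]

theorem sum_Iio_sub_single (α : Fin k → ℤ) (i j : Fin k) :
    ∑ l ∈ Iio j, (α - Pi.single i 1 : Fin k → ℤ) l = ∑ l ∈ Iio j, α l - if i < j then 1 else 0 := by
  simp [sum_sub_distrib]

theorem tot_tot (y : (Fin k → ℤ) → M) : C.tot (C.tot y) = 0 := by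
  ext α
  rw [C.tot_apply]
  simp only [C.tot_apply y, map_add, map_smul, C.d_d, map_sum, smul_add, smul_zero, zero_add,
    sum_add_distrib, sum_sub_single, C.d_per, intSign_sub_one, smul_sum, smul_smul]
  have hcross : ∑ i, ∑ j, (intSign p (∑ l ∈ Iio i, α l) *
      intSign p (∑ l ∈ Iio j, (α - Pi.single i 1 : Fin k → ℤ) l)) • C.per i (α i)
        (C.per j ((α - Pi.single i 1 : Fin k → ℤ) j) (y (α - Pi.single i 1 - Pi.single j 1))) =
        0 := by
    rw [← Finset.sum_product']
    refine Finset.sum_involution (fun x _ => (x.2, x.1)) ?_ ?_ (by simp) (by simp)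
    · rintro ⟨i, j⟩ -
      rcases eq_or_ne i j with rfl | hij
      · simp [C.per_per_sub_one]
      · simp only [sum_Iio_sub_single]
        simp only [Pi.sub_apply, Pi.single_eq_of_ne hij,
          Pi.single_eq_of_ne hij.symm, sub_zero]
        rw [C.per_comm j i, sub_right_comm α (Pi.single j 1), ← add_smul]
        rcases lt_or_gt_of_ne hij with h | h
        · simp only [h, h.not_gt, if_true, if_false, sub_zero, intSign_sub_one]
          ring_nf; simp
        · simp only [h, h.not_gt, if_true, if_false, sub_zero, intSign_sub_one]
          ring_nf; simp
    · rintro ⟨i, j⟩ - h hij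
      obtain rfl : j = i := by simpa using congrArg Prod.fst hij
      simp [C.per_per_sub_one] at h
  rw [hcross, add_zero, ← sum_add_distrib]
  simp only [Pi.zero_apply]
  refine sum_eq_zero fun i _ => ?_
  rw [← add_smul]; ring_nf; simp

theorem tot_congr {y z : (Fin k → ℤ) → M} {α : Fin k → ℤ} (h : y α = z α)
    (h' : ∀ i, y (α - Pi.single i 1) = z (α - Pi.single i 1)) : C.tot y α = C.tot z α := by
  simp [C.tot_apply, h, h']

theorem tot_fixed {Θ : M} (hΘ : ∀ g, C.act g Θ = Θ) (hd : C.d Θ = 0)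
    (κ : (Fin k → ℤ) → ZMod p) : C.tot (fun α => κ α • Θ) = 0 := by
  ext α
  simp [C.tot_apply, hd, C.per_eq_zero_of_fixed _ _ hΘ]

theorem tot_map {M' : Type*} [AddCommGroup M'] [Module (ZMod p) M'] (C' : EquivComplex p k M')
    (L : M →ₗ[ZMod p] M') (y : (Fin k → ℤ) → M) (hd : ∀ α, L (C.d (y α)) = C'.d (L (y α)))
    (hact : ∀ g α, L (C.act g (y α)) = C'.act g (L (y α))) (α : Fin k → ℤ) :
    C'.tot (fun β => L (y β)) α = L (C.tot y α) := by
  have hper : ∀ i a β, L (C.per i a (y β)) = C'.per i a (L (y β)) := by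
    intro i a β
    rcases Int.even_or_odd a with h | h
    · simp [per_of_even, h, hact]
    · simp [per_of_odd, h, hact]
  simp [tot_apply, hd, hper]

theorem per_mem {S : Submodule (ZMod p) M} (hact : ∀ g, ∀ x ∈ S, C.act g x ∈ S) (i : Fin k)
    (a : ℤ) {x : M} (hx : x ∈ S) : C.per i a x ∈ S := by
  rcases Int.even_or_odd a with h | h
  · rw [C.per_of_even i h]; exact S.sum_mem fun t _ => hact _ _ hx
  · rw [C.per_of_odd i h]; exact S.sub_mem (hact _ _ hx) hx

theorem tot_mem {S : Submodule (ZMod p) M} (hact : ∀ g, ∀ x ∈ S, C.act g x ∈ S)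
    (hd : ∀ x ∈ S, C.d x ∈ S) {y : (Fin k → ℤ) → M} (hy : ∀ α, y α ∈ S) (α : Fin k → ℤ) :
    C.tot y α ∈ S := by
  rw [C.tot_apply]
  exact S.add_mem (S.smul_mem _ (hd _ (hy _)))
    (S.sum_mem fun i _ => S.smul_mem _ (C.per_mem hact i _ (hy _)))

theorem d_eq_zero_of_tot {y : (Fin k → ℤ) → M} {α : Fin k → ℤ}
    (h : ∀ i, y (α - Pi.single i 1) = 0) :
    C.tot y α = intSign p (∑ i, α i) • C.d (y α) := by
  simp [C.tot_apply, h]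

/-- If the homology of an invariant subcomplex is spanned by an invariant class `Θ`, then `Θ` placed
in a top multidegree `n` is not a boundary for the total differential. -/
theorem tot_top_nontrivial {S : Submodule (ZMod p) M}
    (hact : ∀ g, ∀ x ∈ S, C.act g x ∈ S) (hd : ∀ x ∈ S, C.d x ∈ S) {Θ : M}
    (hΘ : ∀ g, C.act g Θ = Θ) (hdΘ : C.d Θ = 0)
    (hex : ∀ z ∈ S, C.d z = 0 → ∃ c : ZMod p, ∃ w ∈ S, z = c • Θ + C.d w)
    (hnb : ∀ c : ZMod p, ∀ w ∈ S, c • Θ = C.d w → c = 0)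
    (n : Fin k → ℤ) (y : (Fin k → ℤ) → M) (hyS : ∀ α, y α ∈ S)
    (hy0 : ∀ α, ∑ i, α i < 0 → y α = 0) (c : ZMod p)
    (hy : ∀ α ≤ n, ∑ i, α i < ∑ i, n i → C.tot y α = 0) (hyn : C.tot y n = c • Θ) : c = 0 := by
  have main : ∀ s : ℕ, (s : ℤ) ≤ ∑ i, n i → ∃ h : (Fin k → ℤ) → M, ∃ κ : (Fin k → ℤ) → ZMod p,
      (∀ α, h α ∈ S) ∧ ∀ α ≤ n, ∑ i, α i < s → y α = C.tot h α + κ α • Θ := by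
    intro s
    induction s with
    | zero =>
      intro _
      exact ⟨0, 0, fun α => S.zero_mem, fun α _ h => by simp [hy0 α (by simpa using h)]⟩
    | succ s ih =>
      intro hs
      push_cast at hs
      obtain ⟨h, κ, hS, hh⟩ := ih (by lia)
      set h' : (Fin k → ℤ) → M := fun α => if ∑ i, α i < s then h α else 0 with hh'
      have hS' : ∀ α, h' α ∈ S := fun α => by
        simp only [hh']; split_ifs
        exacts [hS α, S.zero_mem]
      have htot : ∀ α : Fin k → ℤ, ∑ i, α i < s → C.tot h' α = C.tot h α := fun α hα =>
        C.tot_congr (by simp [hh', hα]) fun i => by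
          have : ∑ j, (α - Pi.single i 1 : Fin k → ℤ) j < s := by rw [sum_sub_single]; lia
          simp only [hh', this, if_true]
      have hcyc : ∀ α ≤ n, ∑ i, α i = s → C.d (y α - C.tot h' α) = 0 := by
        intro α hαn hα
        have h1 : C.tot (y - C.tot h' - fun α => κ α • Θ) α = 0 := by
          rw [map_sub, map_sub, C.tot_tot, C.tot_fixed hΘ hdΘ]
          simp [hy α hαn (by lia)]
        rw [C.d_eq_zero_of_tot] at h1
        · have h2 := congrArg (fun x => intSign p (∑ i, α i) • x) h1
          simpa [smul_smul, hdΘ] using h2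
        · intro i
          have hlt : ∑ j, (α - Pi.single i 1 : Fin k → ℤ) j < s := by rw [sum_sub_single]; lia
          have hle : α - Pi.single i 1 ≤ n :=
            (sub_le_self _ (Pi.single_nonneg.2 zero_le_one)).trans hαn
          simp [htot _ hlt, hh _ hle hlt]
      have hch : ∀ α, ∃ c : ZMod p, ∃ w ∈ S, α ≤ n → ∑ i, α i = s →
          y α - C.tot h' α = c • Θ + C.d w := by
        intro α
        by_cases hα : α ≤ n ∧ ∑ i, α i = s
        · obtain ⟨c, w, hw, he⟩ := hex _ (S.sub_mem (hyS α) (C.tot_mem hact hd hS' α))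
            (hcyc α hα.1 hα.2)
          exact ⟨c, w, hw, fun _ _ => he⟩
        · exact ⟨0, 0, S.zero_mem, fun h1 h2 => absurd ⟨h1, h2⟩ hα⟩
      choose c' w hwS hw using hch
      refine ⟨fun α => if ∑ i, α i = s then intSign p (∑ i, α i) • w α else h' α,
        fun α => if ∑ i, α i = s then c' α else κ α, fun α => ?_, fun α hαn hα => ?_⟩
      · dsimp only; split_ifs
        exacts [S.smul_mem _ (hwS α), hS' α]
      · push_cast at hα
        by_cases hαs : ∑ i, α i = s
        · have hz : h' α = 0 := by simp [hh', hαs]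
          have e1 := hw α hαn hαs
          have e2 : C.tot (fun α => if ∑ i, α i = s then intSign p (∑ i, α i) • w α else h' α) α =
              C.tot h' α + C.d (w α) := by
            have hne : ∀ i, ∑ j, (α - Pi.single i 1 : Fin k → ℤ) j ≠ s := fun i => by
              rw [sum_sub_single]; lia
            rw [C.tot_apply, C.tot_apply h']
            simp only [hαs, hne, if_true, if_false, hz, map_zero, smul_zero, zero_add, map_smul,
              smul_smul, intSign_mul_self, one_smul]
            exact add_comm _ _
          rw [e2]
          simp only [if_pos hαs]
          rw [sub_eq_iff_eq_add] at e1
          rw [e1]; abel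
        · have hlt : ∑ i, α i < s := by lia
          simp only [if_neg hαs]
          rw [hh α hαn hlt, ← htot α hlt]
          congr 1
          refine C.tot_congr (by simp [hαs]) fun i => ?_
          have hne : ∑ j, (α - Pi.single i 1 : Fin k → ℤ) j ≠ s := by rw [sum_sub_single]; lia
          simp only [hne, if_false]
  by_cases hneg : ∑ i, n i < 0
  · refine hnb c 0 S.zero_mem ?_
    rw [← hyn, C.d_eq_zero_of_tot, hy0 n hneg]
    · simp
    · intro i; apply hy0; rw [sum_sub_single]; lia
  obtain ⟨h, κ, hS, hh⟩ := main (∑ i, n i).toNat (by lia)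
  have hcast : ((∑ i, n i).toNat : ℤ) = ∑ i, n i := by lia
  rw [hcast] at hh
  refine hnb c (intSign p (∑ i, n i) • (y n - C.tot h n))
    (S.smul_mem _ (S.sub_mem (hyS n) (C.tot_mem hact hd hS n))) ?_
  have h1 : C.tot (y - C.tot h - fun α => κ α • Θ) n = c • Θ := by
    rw [map_sub, map_sub, C.tot_tot, C.tot_fixed hΘ hdΘ]
    simp [hyn]
  rw [C.d_eq_zero_of_tot] at h1
  · rw [← h1]; simp [hdΘ]
  · intro i
    have hlt : ∑ j, (n - Pi.single i 1 : Fin k → ℤ) j < ∑ j, n j := by rw [sum_sub_single]; lia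
    have hle : n - Pi.single i 1 ≤ n := sub_le_self _ (Pi.single_nonneg.2 zero_le_one)
    simp [hh _ hle hlt]

end EquivComplex

/-! ### The exterior algebra on a set of vertices -/

/-- The exterior algebra with generators indexed by `V`. -/
abbrev VertexAlgebra (F V : Type*) [CommRing F] : Type _ := ExteriorAlgebra F (V →₀ F)

namespace VertexAlgebra

variable {F V : Type*} [CommRing F]

/-- The generator attached to a vertex. -/
noncomputable def vx (v : V) : VertexAlgebra F V := ExteriorAlgebra.ι F (Finsupp.single v 1)

/-- Contraction with the coordinate functional of a vertex. -/
noncomputable def ctr (v : V) : VertexAlgebra F V →ₗ[F] VertexAlgebra F V :=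
  CliffordAlgebra.contractLeft (Q := (0 : QuadraticForm F (V →₀ F))) (Finsupp.lapply v)

variable (F V) in
/-- The (augmented) simplicial boundary operator. -/
noncomputable def bdry : VertexAlgebra F V →ₗ[F] VertexAlgebra F V :=
  CliffordAlgebra.contractLeft (Q := (0 : QuadraticForm F (V →₀ F)))
    (Finsupp.linearCombination F fun _ => (1 : F))

theorem ctr_vx_mul [DecidableEq V] (v u : V) (x : VertexAlgebra F V) :
    ctr v (vx u * x) = (if u = v then x else 0) - vx u * ctr v x := by
  have h := CliffordAlgebra.contractLeft_ι_mul (Q := (0 : QuadraticForm F (V →₀ F)))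
    (Finsupp.lapply v) (Finsupp.single u 1) x
  rw [ctr, vx]
  refine h.trans ?_
  simp only [Finsupp.lapply_apply, Finsupp.single_apply, ite_smul, one_smul, zero_smul]

theorem ctr_vx_mul_self (v : V) (x : VertexAlgebra F V) :
    ctr v (vx v * x) = x - vx v * ctr v x := by
  classical simp [ctr_vx_mul]

theorem ctr_vx_mul_of_ne {v u : V} (h : u ≠ v) (x : VertexAlgebra F V) :
    ctr v (vx u * x) = -(vx u * ctr v x) := by
  classical simp [ctr_vx_mul, h]

theorem bdry_vx_mul (u : V) (x : VertexAlgebra F V) :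
    bdry F V (vx u * x) = x - vx u * bdry F V x := by
  have h := CliffordAlgebra.contractLeft_ι_mul (Q := (0 : QuadraticForm F (V →₀ F)))
    (Finsupp.linearCombination F fun _ => (1 : F)) (Finsupp.single u 1) x
  rw [bdry, vx]
  refine h.trans ?_
  simp only [Finsupp.linearCombination_single, smul_eq_mul, mul_one, one_smul]

@[simp] theorem ctr_algebraMap (v : V) (c : F) : ctr v (algebraMap F (VertexAlgebra F V) c) = 0 :=
  CliffordAlgebra.contractLeft_algebraMap ..

@[simp] theorem ctr_one (v : V) : ctr v (1 : VertexAlgebra F V) = 0 :=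
  CliffordAlgebra.contractLeft_one ..

@[simp] theorem bdry_algebraMap (c : F) : bdry F V (algebraMap F (VertexAlgebra F V) c) = 0 :=
  CliffordAlgebra.contractLeft_algebraMap ..

@[simp] theorem bdry_one : bdry F V (1 : VertexAlgebra F V) = 0 :=
  CliffordAlgebra.contractLeft_one ..

@[simp] theorem bdry_bdry (x : VertexAlgebra F V) : bdry F V (bdry F V x) = 0 :=
  CliffordAlgebra.contractLeft_contractLeft ..

@[simp] theorem ctr_ctr_self (v : V) (x : VertexAlgebra F V) : ctr v (ctr v x) = 0 :=
  CliffordAlgebra.contractLeft_contractLeft ..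

theorem ctr_comm (u v : V) (x : VertexAlgebra F V) : ctr u (ctr v x) = -ctr v (ctr u x) :=
  CliffordAlgebra.contractLeft_comm ..

theorem ctr_bdry (v : V) (x : VertexAlgebra F V) : ctr v (bdry F V x) = -bdry F V (ctr v x) :=
  CliffordAlgebra.contractLeft_comm ..

theorem bdry_ctr (v : V) (x : VertexAlgebra F V) : bdry F V (ctr v x) = -ctr v (bdry F V x) :=
  CliffordAlgebra.contractLeft_comm ..

@[simp] theorem vx_mul_self (v : V) : vx v * vx v = (0 : VertexAlgebra F V) :=
  ExteriorAlgebra.ι_sq_zero _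

@[simp] theorem vx_mul_vx_mul_self (v : V) (x : VertexAlgebra F V) : vx v * (vx v * x) = 0 := by
  rw [← mul_assoc, vx_mul_self, zero_mul]

theorem vx_anticomm (u v : V) : (vx u * vx v : VertexAlgebra F V) = -(vx v * vx u) :=
  eq_neg_of_add_eq_zero_left (ExteriorAlgebra.ι_add_mul_swap _ _)

theorem ctr_vx [DecidableEq V] (v u : V) :
    ctr v (vx u : VertexAlgebra F V) = if u = v then 1 else 0 := by
  have := ctr_vx_mul v u (1 : VertexAlgebra F V)
  simpa using this

@[simp] theorem bdry_vx (u : V) : bdry F V (vx u) = 1 := by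
  have := bdry_vx_mul u (1 : VertexAlgebra F V)
  simpa using this

theorem vx_induction {P : VertexAlgebra F V → Prop}
    (hc : ∀ c, P (algebraMap F _ c)) (hadd : ∀ x y, P x → P y → P (x + y))
    (hvx : ∀ v x, P x → P (vx v * x)) (x : VertexAlgebra F V) : P x := by
  suffices h : ∀ c : F, P (c • x) by simpa using h 1
  induction x using CliffordAlgebra.left_induction with
  | algebraMap r => intro c; rw [Algebra.smul_def, ← map_mul]; exact hc _
  | add x y hx hy => intro c; rw [smul_add]; exact hadd _ _ (hx c) (hy c)
  | ι_mul x m hx =>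
    induction m using Finsupp.induction_linear with
    | zero => intro c; simpa using hc 0
    | add f g hf hg =>
      intro c
      rw [map_add, add_mul, smul_add]
      exact hadd _ _ (hf c) (hg c)
    | single v a =>
      intro c
      have h : (Finsupp.single v a : V →₀ F) = a • Finsupp.single v 1 := by simp
      rw [h, map_smul, smul_mul_assoc, smul_smul, ← mul_smul_comm]
      exact hvx v _ (hx _)

/-- The algebra endomorphism induced by a map of vertices. -/
noncomputable def mapVx (σ : V → V) : VertexAlgebra F V →ₐ[F] VertexAlgebra F V :=
  ExteriorAlgebra.map (Finsupp.lmapDomain F F σ)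

@[simp] theorem mapVx_vx (σ : V → V) (v : V) : mapVx σ (vx v : VertexAlgebra F V) = vx (σ v) := by
  simp [mapVx, vx, ExteriorAlgebra.map_apply_ι]

theorem mapVx_id (x : VertexAlgebra F V) : mapVx id x = x := by
  induction x using vx_induction with
  | hc c => simp
  | hadd x y hx hy => simp [hx, hy]
  | hvx v x hx => simp [hx]

theorem mapVx_comp (σ τ : V → V) (x : VertexAlgebra F V) :
    mapVx (σ ∘ τ) x = mapVx σ (mapVx τ x) := by
  induction x using vx_induction with
  | hc c => simp
  | hadd x y hx hy => simp [hx, hy]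
  | hvx v x hx => simp [hx]

theorem bdry_mapVx (σ : V → V) (x : VertexAlgebra F V) :
    bdry F V (mapVx σ x) = mapVx σ (bdry F V x) := by
  induction x using vx_induction with
  | hc c => simp
  | hadd x y hx hy => simp [hx, hy]
  | hvx v x hx => simp [hx, bdry_vx_mul]

theorem ctr_mapVx {σ : V → V} (hσ : σ.Injective) (v : V) (x : VertexAlgebra F V) :
    ctr (σ v) (mapVx σ x) = mapVx σ (ctr v x) := by
  classical
  induction x using vx_induction with
  | hc c => simp
  | hadd x y hx hy => simp [hx, hy]
  | hvx u x hx =>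
    simp only [map_mul, mapVx_vx, ctr_vx_mul, hx, hσ.eq_iff, map_sub]
    split_ifs <;> simp

theorem commute_of_vx {w : VertexAlgebra F V} (h : ∀ v, Commute w (vx v)) (x : VertexAlgebra F V) :
    Commute w x := by
  induction x using vx_induction with
  | hc c => exact Algebra.commutes c w |>.symm
  | hadd x y hx hy => exact hx.add_right hy
  | hvx v x hx => exact (h v).mul_right hx

theorem commute_vx_mul_vx (u v : V) (x : VertexAlgebra F V) : Commute (vx u * vx v) x := by
  refine commute_of_vx (fun t => ?_) x
  rw [commute_iff_eq, mul_assoc, vx_anticomm v t, mul_neg, ← mul_assoc, vx_anticomm u t, neg_mul,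
    neg_neg, mul_assoc]

/-! ### Iterated contractions -/

/-- Contraction with all the vertices of a list, the last one first. -/
noncomputable def ctrs : List V → VertexAlgebra F V →ₗ[F] VertexAlgebra F V
  | [] => LinearMap.id
  | v :: l => ctr v ∘ₗ ctrs l

@[simp] theorem ctrs_nil (x : VertexAlgebra F V) : ctrs [] x = x := rfl

@[simp] theorem ctrs_cons (v : V) (l : List V) (x : VertexAlgebra F V) :
    ctrs (v :: l) x = ctr v (ctrs l x) := rfl

theorem ctrs_append (l l' : List V) (x : VertexAlgebra F V) :
    ctrs (l ++ l') x = ctrs l (ctrs l' x) := by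
  induction l with
  | nil => rfl
  | cons v l ih => simp [ih]

theorem ctrs_ctr (l : List V) (v : V) (x : VertexAlgebra F V) :
    ctrs l (ctr v x) = (-1 : F) ^ l.length • ctr v (ctrs l x) := by
  induction l with
  | nil => simp
  | cons u l ih => simp [ih, ctr_comm u v, pow_succ]

theorem ctrs_bdry (l : List V) (x : VertexAlgebra F V) :
    ctrs l (bdry F V x) = (-1 : F) ^ l.length • bdry F V (ctrs l x) := by
  induction l with
  | nil => simp
  | cons u l ih => simp [ih, ctr_bdry u, pow_succ]

theorem ctrs_vx_mul {l : List V} {u : V} (hu : u ∉ l) (x : VertexAlgebra F V) :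
    ctrs l (vx u * x) = (-1 : F) ^ l.length • (vx u * ctrs l x) := by
  induction l with
  | nil => simp
  | cons v l ih =>
    simp only [List.mem_cons, not_or] at hu
    simp [ih hu.2, ctr_vx_mul_of_ne hu.1, pow_succ]

theorem ctrs_eq_zero_of_ctr {l : List V} {v : V} (hv : v ∈ l) {x : VertexAlgebra F V}
    (hx : ctr v x = 0) : ctrs l x = 0 := by
  induction l with
  | nil => simp at hv
  | cons u l ih =>
    rcases List.mem_cons.1 hv with rfl | h
    · have := ctrs_ctr l v x
      rw [hx, map_zero] at this
      have h2 := congrArg (fun y => (-1 : F) ^ l.length • y) this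
      simpa [smul_smul, ← mul_pow] using h2.symm
    · simp [ih h]

theorem ctr_ctrs_of_mem {l : List V} {v : V} (hv : v ∈ l) (x : VertexAlgebra F V) :
    ctr v (ctrs l x) = 0 := by
  have h := ctrs_ctr l v x
  rw [ctrs_eq_zero_of_ctr hv (ctr_ctr_self v x)] at h
  have h2 := congrArg (fun y => (-1 : F) ^ l.length • y) h
  simpa [smul_smul, ← mul_pow] using h2.symm

theorem ctrs_perm {l l' : List V} (h : l.Perm l') {x : VertexAlgebra F V} (hx : ctrs l x = 0) :
    ctrs l' x = 0 := by
  suffices H : ctrs l' x = ctrs l x ∨ ctrs l' x = -ctrs l x by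
    rcases H with H | H <;> simp [H, hx]
  clear hx
  induction h with
  | nil => simp
  | cons v _ ih => rcases ih with ih | ih <;> simp [ih]
  | swap u v l => right; simp [ctr_comm u v]
  | trans _ _ ih ih' => rcases ih with ih | ih <;> rcases ih' with ih' | ih' <;> simp [ih, ih']

theorem ctrs_mapVx {σ : V → V} (hσ : σ.Injective) (l : List V) (x : VertexAlgebra F V) :
    ctrs (l.map σ) (mapVx σ x) = mapVx σ (ctrs l x) := by
  induction l with
  | nil => rfl
  | cons v l ih => simp [ih, ctr_mapVx hσ]

/-- An element killed by all contractions is a scalar. -/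
theorem exists_algebraMap_of_ctr_eq_zero {x : VertexAlgebra F V} (hx : ∀ v, ctr v x = 0) :
    ∃ c : F, x = algebraMap F _ c := by
  classical
  have key : ∀ y : VertexAlgebra F V, ∃ (c : F) (l : List V),
      ∀ l', l ⊆ l' → l'.foldr (fun v z => ctr v (vx v * z)) y = algebraMap F _ c := by
    have hP : ∀ (v : V) (y : VertexAlgebra F V), ctr v (vx v * (vx v * y)) = 0 := by simp
    intro y
    induction y using vx_induction with
    | hc c =>
      refine ⟨c, [], fun l' _ => ?_⟩
      induction l' with
      | nil => simp
      | cons v l' ih => rw [List.foldr_cons, ih (List.nil_subset l'), ctr_vx_mul_self]; simp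
    | hadd x y hx hy =>
      obtain ⟨c, l, h⟩ := hx
      obtain ⟨c', l', h'⟩ := hy
      refine ⟨c + c', l ++ l', fun l'' hl => ?_⟩
      rw [map_add, ← h l'' (fun _ h => hl (List.mem_append_left _ h)),
        ← h' l'' (fun _ h => hl (List.mem_append_right _ h))]
      clear h h' hl
      induction l'' with
      | nil => rfl
      | cons v l ih => simp [ih, mul_add]
    | hvx v x hx =>
      refine ⟨0, [v], fun l' hl => ?_⟩
      have hv : v ∈ l' := hl (by simp)
      clear hl hx
      have aux : ∀ l : List V, ∃ z,
          l.foldr (fun v z => ctr v (vx v * z)) (vx v * x) = vx v * z := by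
        intro l
        induction l with
        | nil => exact ⟨x, rfl⟩
        | cons u l ih =>
          obtain ⟨z, hz⟩ := ih
          rw [List.foldr_cons, hz]
          by_cases huv : u = v
          · subst huv; exact ⟨0, by simp⟩
          · refine ⟨ctr u (vx u * z), ?_⟩
            rw [← mul_assoc, vx_anticomm, neg_mul, mul_assoc, map_neg,
              ctr_vx_mul_of_ne (Ne.symm huv), neg_neg]
      rw [map_zero]
      induction l' with
      | nil => simp at hv
      | cons u l' ih =>
        rcases List.mem_cons.1 hv with rfl | h
        · obtain ⟨z, hz⟩ := aux l'
          rw [List.foldr_cons, hz, hP]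
        · rw [List.foldr_cons, ih h]; simp
  obtain ⟨c, l, h⟩ := key x
  refine ⟨c, ?_⟩
  rw [← h l (List.Subset.refl l)]
  clear h
  induction l with
  | nil => rfl
  | cons v l ih => rw [List.foldr_cons, ← ih, ctr_vx_mul_self, hx, mul_zero, sub_zero]

end VertexAlgebra

namespace VertexAlgebra

section Acyclic

variable {F V : Type*} [CommRing F]

theorem ctrs_eq_zero_of_subset {l l' : List V} (hl : l.Nodup) (h : l ⊆ l') {x : VertexAlgebra F V}
    (hx : ctrs l x = 0) : ctrs l' x = 0 := by
  obtain ⟨l₁, h₁, h₂⟩ := List.subperm_of_subset hl h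
  obtain ⟨r, hr⟩ := h₂.exists_perm_append
  refine ctrs_perm ((hr.trans ((h₁.append_right r).trans List.perm_append_comm)).symm) ?_
  rw [ctrs_append, hx, map_zero]

/-- The subcomplex of chains that contain no full block is acyclic outside of its top class. -/
theorem exists_bdry_eq (L : List (V × List V)) (hL : (L.flatMap fun b => b.1 :: b.2).Nodup)
    (z : VertexAlgebra F V) (hsupp : ∀ v ∉ L.flatMap (fun b => b.1 :: b.2), ctr v z = 0)
    (hz : ∀ b ∈ L, ctrs (b.1 :: b.2) z = 0) (hdz : bdry F V z = 0)
    (htop : ctrs (L.flatMap fun b => b.2) z = 0) :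
    ∃ w : VertexAlgebra F V, (∀ v ∉ L.flatMap (fun b => b.1 :: b.2), ctr v w = 0) ∧
      (∀ b ∈ L, ctrs (b.1 :: b.2) w = 0) ∧ bdry F V w = z := by
  induction L generalizing z with
  | nil =>
    refine ⟨0, by simp, by simp, ?_⟩
    simpa using htop.symm
  | cons b L ih =>
    obtain ⟨v, t⟩ := b
    induction t generalizing z with
    | nil =>
      simp only [List.flatMap_cons, List.cons_append, List.nil_append, List.nodup_cons,
        List.mem_cons, not_or, and_imp, forall_eq_or_imp, ctrs_cons, ctrs_nil] at hL hsupp hz htop ⊢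
      obtain ⟨w, hw1, hw2, hw3⟩ := ih hL.2 z (fun u hu => by
        by_cases h : u = v
        · subst h; exact hz.1
        · exact hsupp u h hu) hz.2 hdz htop
      exact ⟨w, fun u _ hu => hw1 u hu, ⟨hw1 v hL.1, hw2⟩, hw3⟩
    | cons u t iht =>
      simp only [List.flatMap_cons, List.cons_append, List.nodup_cons, List.mem_cons, not_or,
        and_imp, forall_eq_or_imp, List.mem_append] at hL hsupp hz htop iht ⊢
      obtain ⟨⟨hvu, hvt, hvL⟩, ⟨hut, huL⟩, hnd⟩ := hL
      have hblock : ∀ b ∈ L, v ∉ b.1 :: b.2 ∧ u ∉ b.1 :: b.2 := fun b hb =>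
        ⟨fun h => hvL (List.mem_flatMap.2 ⟨b, hb, h⟩),
          fun h => huL (List.mem_flatMap.2 ⟨b, hb, h⟩)⟩
      obtain ⟨w, hw1, ⟨hw2, hw3⟩, hw4⟩ := iht (ctr u z) (by rw [bdry_ctr, hdz]; simp) hvt hvL hnd
        (fun x hxv hxt hxL => by
          by_cases h : x = u
          · subst h; simp
          · rw [ctr_comm, hsupp x hxv h hxt hxL]; simp)
        (by
          have : ctrs (v :: (t ++ [u])) z = 0 :=
            ctrs_perm (((List.perm_append_singleton u t).symm).cons v) hz.1
          simpa [ctrs_append] using this)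
        (fun b hb => by rw [ctrs_ctr, hz.2 b hb]; simp)
        (by
          have := ctrs_perm (List.perm_append_singleton u
            (t ++ List.flatMap (fun b => b.2) L)).symm htop
          simpa [ctrs_append] using this)
      have huw : ctr u w = 0 := hw1 u (Ne.symm hvu) hut huL
      set q := z - vx u * ctr u z + w with hq
      have hdq : bdry F V q = 0 := by
        simp only [hq, map_add, map_sub, hdz, bdry_vx_mul, bdry_ctr, hw4]
        simp
      have huq : ctr u q = 0 := by
        simp only [hq, map_add, map_sub, ctr_vx_mul_self, huw, ctr_ctr_self]
        simp
      have hLq : ∀ b ∈ L, ctrs (b.1 :: b.2) q = 0 := fun b hb => by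
        simp only [hq, map_add, map_sub]
        rw [hz.2 b hb, ctrs_vx_mul (hblock b hb).2, hw3 b hb, ctrs_ctr, hz.2 b hb]
        simp
      refine ⟨vx v * q - vx u * w, fun x hxv hxu hxt hxL => ?_, ⟨?_, fun b hb => ?_⟩, ?_⟩
      · have e1 := hsupp x hxv hxu hxt hxL
        have e2 := hw1 x hxv hxt hxL
        rw [map_sub, ctr_vx_mul_of_ne (Ne.symm hxv), ctr_vx_mul_of_ne (Ne.symm hxu), e2]
        simp only [hq, map_add, map_sub, e1, e2, ctr_vx_mul_of_ne (Ne.symm hxu), ctr_comm x u]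
        simp
      · rw [map_sub, ctrs_eq_zero_of_ctr (v := u) (by simp)
          (by rw [ctr_vx_mul_of_ne hvu, huq]; simp), zero_sub, neg_eq_zero]
        refine ctrs_perm (List.Perm.swap v u t) ?_
        have : ctrs (v :: t) (vx u * w) = 0 := by
          rw [ctrs_vx_mul (by simp [Ne.symm hvu, hut]), hw2]; simp
        rw [ctrs_cons, this, map_zero]
      · rw [map_sub, ctrs_vx_mul (hblock b hb).1, ctrs_vx_mul (hblock b hb).2, hLq b hb, hw3 b hb]
        simp
      · rw [map_sub, bdry_vx_mul, bdry_vx_mul, hdq, hw4, hq, mul_zero]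
        abel

end Acyclic

section Lines

variable {p : ℕ} {B : Type*}

/-- The vertices of a line, other than the base vertex. -/
def lineTail (p : ℕ) (b : B) : List (B × ZMod p) :=
  (List.range (p - 1)).map fun t => (b, ((t + 1 : ℕ) : ZMod p))

/-- The vertices of a line. -/
def line (p : ℕ) (b : B) : List (B × ZMod p) := (b, 0) :: lineTail p b

theorem line_eq [NeZero p] (b : B) :
    line p b = (List.range p).map fun t : ℕ => (b, (t : ZMod p)) := by
  have h : List.range p = List.range (p - 1 + 1) := by
    rw [Nat.sub_add_cancel (NeZero.pos p)]
  rw [h, List.range_succ_eq_map]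
  simp [line, lineTail, Function.comp_def]

theorem mem_line [NeZero p] (b : B) (v : B × ZMod p) : v ∈ line p b ↔ v.1 = b := by
  rw [line_eq]
  constructor
  · simp only [List.mem_map]
    rintro ⟨t, -, rfl⟩; rfl
  · rintro rfl
    exact List.mem_map.2 ⟨v.2.val, List.mem_range.2 v.2.val_lt, by simp⟩

theorem nodup_line [NeZero p] (b : B) : (line p b).Nodup := by
  rw [line_eq]
  refine List.Nodup.map_on (fun x hx y hy h => ?_) List.nodup_range
  have := congrArg (fun v => ZMod.val (Prod.snd v)) h
  simpa [ZMod.val_cast_of_lt (List.mem_range.1 hx), ZMod.val_cast_of_lt (List.mem_range.1 hy)]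
    using this

/-- The chains none of whose simplices contains a full line. -/
noncomputable def deleted (p : ℕ) (B : Type*) :
    Submodule (ZMod p) (VertexAlgebra (ZMod p) (B × ZMod p)) :=
  ⨅ b : B, LinearMap.ker (ctrs (line p b))

theorem mem_deleted {z : VertexAlgebra (ZMod p) (B × ZMod p)} :
    z ∈ deleted p B ↔ ∀ b, ctrs (line p b) z = 0 := by
  simp [deleted]

theorem bdry_mem_deleted {z : VertexAlgebra (ZMod p) (B × ZMod p)} (hz : z ∈ deleted p B) :
    bdry (ZMod p) _ z ∈ deleted p B := by
  rw [mem_deleted] at hz ⊢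
  intro b
  rw [ctrs_bdry, hz b]; simp

theorem mapVx_mem_deleted [NeZero p] {σ : B × ZMod p → B × ZMod p} (hσ : σ.Injective)
    (hline : ∀ b, ∃ b', ∀ a, (σ (b', a)).1 = b) {z : VertexAlgebra (ZMod p) (B × ZMod p)}
    (hz : z ∈ deleted p B) : mapVx σ z ∈ deleted p B := by
  rw [mem_deleted] at hz ⊢
  intro b
  obtain ⟨b', hb'⟩ := hline b
  refine ctrs_eq_zero_of_subset (l := (line p b').map σ) ((nodup_line b').map hσ) ?_ ?_
  · intro v hv
    obtain ⟨u, hu, rfl⟩ := List.mem_map.1 hv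
    rw [mem_line] at hu ⊢
    subst hu
    exact hb' u.2
  · rw [ctrs_mapVx hσ, hz]; simp

variable [Fintype B]

/-- The vertices of all the lines, other than the base vertices. -/
noncomputable def allTails (p : ℕ) (B : Type*) [Fintype B] : List (B × ZMod p) :=
  (univ : Finset B).toList.flatMap (lineTail p)

theorem exists_ctrs_allTails [NeZero p] {z : VertexAlgebra (ZMod p) (B × ZMod p)}
    (hz : z ∈ deleted p B) :
    ∃ c : ZMod p, ctrs (allTails p B) z = algebraMap (ZMod p) _ c := by
  refine exists_algebraMap_of_ctr_eq_zero fun v => ?_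
  by_cases hv : v ∈ allTails p B
  · exact ctr_ctrs_of_mem hv z
  have hv0 : v = (v.1, 0) := by
    by_contra h
    refine hv (List.mem_flatMap.2 ⟨v.1, by simp, ?_⟩)
    exact ((List.mem_cons.1 ((mem_line v.1 v).2 rfl)).resolve_left h)
  have : ctrs (v :: allTails p B) z = 0 := by
    refine ctrs_eq_zero_of_subset (nodup_line v.1) ?_ (mem_deleted.1 hz v.1)
    rw [line, ← hv0]
    exact List.cons_subset_cons _ fun u hu => List.mem_flatMap.2 ⟨v.1, by simp, hu⟩
  exact this

theorem exists_bdry_of_ctrs_allTails [NeZero p] {z : VertexAlgebra (ZMod p) (B × ZMod p)}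
    (hz : z ∈ deleted p B) (hdz : bdry (ZMod p) _ z = 0) (htop : ctrs (allTails p B) z = 0) :
    ∃ w ∈ deleted p B, bdry (ZMod p) _ w = z := by
  have hmem : ∀ v : B × ZMod p, v ∈ ((univ : Finset B).toList.map
      fun b => ((b, (0 : ZMod p)), lineTail p b)).flatMap fun b => b.1 :: b.2 := fun v => by
    rw [List.flatMap_map]
    exact List.mem_flatMap.2 ⟨v.1, by simp, (mem_line v.1 v).2 rfl⟩
  have hnodup : (((univ : Finset B).toList.map
      fun b => ((b, (0 : ZMod p)), lineTail p b)).flatMap fun b => b.1 :: b.2).Nodup := by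
    rw [List.flatMap_map]
    refine List.nodup_flatMap.2 ⟨fun b _ => nodup_line b, ?_⟩
    refine (Finset.nodup_toList _).imp fun {b b'} h => ?_
    intro v hv hv'
    exact h (((mem_line b v).1 hv).symm.trans ((mem_line b' v).1 hv'))
  obtain ⟨w, -, hw, hdw⟩ := exists_bdry_eq _ hnodup z
    (fun v hv => absurd (hmem v) hv)
    (fun b hb => by
      obtain ⟨b', -, hb'⟩ := List.mem_map.1 hb
      rw [← hb']
      exact mem_deleted.1 hz b') hdz
    (by rw [List.flatMap_map]; exact htop)
  refine ⟨w, mem_deleted.2 fun b => ?_, hdw⟩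
  exact hw ((b, 0), lineTail p b) (List.mem_map.2 ⟨b, by simp, rfl⟩)

/-- A cycle of the deleted complex with nonzero top contraction generates its homology. -/
theorem exists_eq_smul_add_bdry [Fact p.Prime] {Θ : VertexAlgebra (ZMod p) (B × ZMod p)}
    (hΘ : Θ ∈ deleted p B) (hdΘ : bdry (ZMod p) _ Θ = 0) {κ : ZMod p} (hκ : κ ≠ 0)
    (hΘκ : ctrs (allTails p B) Θ = algebraMap (ZMod p) _ κ)
    {z : VertexAlgebra (ZMod p) (B × ZMod p)} (hz : z ∈ deleted p B)
    (hdz : bdry (ZMod p) _ z = 0) :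
    ∃ c : ZMod p, ∃ w ∈ deleted p B, z = c • Θ + bdry (ZMod p) _ w := by
  obtain ⟨c, hc⟩ := exists_ctrs_allTails hz
  obtain ⟨w, hw, hdw⟩ := exists_bdry_of_ctrs_allTails (z := z - (c / κ) • Θ)
    (Submodule.sub_mem _ hz (Submodule.smul_mem _ _ hΘ)) (by simp [hdz, hdΘ]) (by
      rw [map_sub, map_smul, hc, hΘκ, Algebra.smul_def, ← map_mul, div_mul_cancel₀ c hκ, sub_self])
  exact ⟨c / κ, w, hw, by rw [hdw]; abel⟩

theorem eq_zero_of_smul_eq_bdry [Fact p.Prime] {Θ : VertexAlgebra (ZMod p) (B × ZMod p)}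
    {κ : ZMod p} (hκ : κ ≠ 0) (hΘκ : ctrs (allTails p B) Θ = algebraMap (ZMod p) _ κ) (c : ZMod p)
    {w : VertexAlgebra (ZMod p) (B × ZMod p)} (hw : w ∈ deleted p B)
    (h : c • Θ = bdry (ZMod p) _ w) : c = 0 := by
  obtain ⟨e, he⟩ := exists_ctrs_allTails hw
  have h1 := congrArg (ctrs (allTails p B)) h
  rw [ctrs_bdry, he, map_smul, hΘκ, bdry_algebraMap, smul_zero, Algebra.smul_def, ← map_mul,
    ← map_zero (algebraMap (ZMod p) (VertexAlgebra (ZMod p) (B × ZMod p))),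
    ExteriorAlgebra.algebraMap_inj] at h1
  exact (mul_eq_zero.1 h1).resolve_right hκ

end Lines

end VertexAlgebra

namespace VertexAlgebra

section Prod

variable {F V : Type*} [CommRing F]

theorem list_prod_mul_vx (l : List V) (v : V) :
    ((l.map vx).prod * vx v : VertexAlgebra F V) =
      (-1 : F) ^ l.length • (vx v * (l.map vx).prod) := by
  induction l with
  | nil => simp
  | cons u l ih =>
    simp only [List.map_cons, List.prod_cons, mul_assoc, ih, List.length_cons]
    rw [mul_smul_comm, ← mul_assoc, vx_anticomm, neg_mul, mul_assoc, smul_neg, pow_succ,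
      mul_neg_one, neg_smul]

theorem list_prod_mul_vx_of_mem {l : List V} {v : V} (hv : v ∈ l) :
    (l.map vx).prod * vx v = (0 : VertexAlgebra F V) := by
  induction l with
  | nil => simp at hv
  | cons u l ih =>
    rcases List.mem_cons.1 hv with rfl | h
    · rw [list_prod_mul_vx, List.map_cons, List.prod_cons, vx_mul_vx_mul_self, smul_zero]
    · rw [List.map_cons, List.prod_cons, mul_assoc, ih h, mul_zero]

theorem ctr_list_prod {l : List V} {v : V} (hv : v ∉ l) :
    ctr v (l.map vx).prod = (0 : VertexAlgebra F V) := by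
  induction l with
  | nil => simp
  | cons u l ih =>
    simp only [List.mem_cons, not_or] at hv
    rw [List.map_cons, List.prod_cons, ctr_vx_mul_of_ne (Ne.symm hv.1), ih hv.2, mul_zero, neg_zero]

theorem ctrs_list_prod {l : List V} (hl : l.Nodup) :
    ∃ e : ℕ, ctrs l (l.map vx).prod = (-1 : F) ^ e • (1 : VertexAlgebra F V) := by
  induction l with
  | nil => exact ⟨0, by simp⟩
  | cons v l ih =>
    rw [List.nodup_cons] at hl
    obtain ⟨e, he⟩ := ih hl.2
    refine ⟨l.length + e, ?_⟩
    rw [ctrs_cons, List.map_cons, List.prod_cons, ctrs_vx_mul hl.1, he, map_smul, mul_smul_comm,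
      mul_one, map_smul, smul_smul, pow_add]
    classical rw [ctr_vx, if_pos rfl]

theorem add_pow_of_mul_self_eq_zero {R : Type*} [Ring R] {a x : R} (h : Commute a x)
    (hx : x * x = 0) (n : ℕ) : (a + x) ^ (n + 1) = a ^ (n + 1) + (n + 1 : ℕ) • (a ^ n * x) := by
  induction n with
  | zero => simp
  | succ n ih =>
    have h1 : a ^ n * x * a = a ^ (n + 1) * x := by
      rw [mul_assoc, ← h.eq, ← mul_assoc, pow_succ]
    have h2 : a ^ n * x * x = 0 := by rw [mul_assoc, hx, mul_zero]
    rw [pow_succ (a + x), ih, mul_add, add_mul, add_mul, smul_mul_assoc, smul_mul_assoc, h1, h2,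
      smul_zero, add_zero, ← pow_succ, add_assoc, add_comm (_ • _), succ_nsmul' _ (n + 1)]

end Prod

section LineForm

variable {p : ℕ} [Fact p.Prime] {B : Type*}

local notation "𝔸" => VertexAlgebra (ZMod p) (B × ZMod p)

/-- The invariant quadratic element attached to a line. -/
noncomputable def lineForm (b : B) : VertexAlgebra (ZMod p) (B × ZMod p) :=
  ∑ a : ZMod p, vx (b, a) * vx (b, a + 1)

theorem commute_lineForm (b : B) (x : 𝔸) : Commute (lineForm b) x :=
  Commute.sum_left _ _ _ fun _ _ => commute_vx_mul_vx _ _ x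

theorem bdry_lineForm_mul (b : B) (x : 𝔸) :
    bdry _ _ (lineForm b * x) = lineForm b * bdry _ _ x := by
  have h : ∑ a : ZMod p, (vx (b, a + 1) : 𝔸) = ∑ a : ZMod p, vx (b, a) :=
    Equiv.sum_comp (Equiv.addRight (1 : ZMod p)) fun a => (vx (b, a) : 𝔸)
  simp only [lineForm, sum_mul, map_sum, mul_assoc, bdry_vx_mul, mul_sub]
  simp only [sub_sub_eq_add_sub, sum_sub_distrib, sum_add_distrib, ← sum_mul, h]
  abel

theorem bdry_lineForm_pow_mul (b : B) (s : ℕ) (x : 𝔸) :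
    bdry _ _ (lineForm b ^ s * x) = lineForm b ^ s * bdry _ _ x := by
  induction s with
  | zero => simp
  | succ s ih => rw [pow_succ', mul_assoc, bdry_lineForm_mul, ih, mul_assoc]

theorem ctr_lineForm_mul {b : B} {v : B × ZMod p} (hv : v.1 ≠ b) (x : 𝔸) :
    ctr v (lineForm b * x) = lineForm b * ctr v x := by
  have h : ∀ a, (b, a) ≠ v := fun a h => hv (by rw [← h])
  simp [lineForm, sum_mul, map_sum, mul_assoc, ctr_vx_mul_of_ne (h _)]

theorem mapVx_lineForm {σ : B × ZMod p → B × ZMod p} {b b' : B} {c : ZMod p}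
    (hσ : ∀ a, σ (b, a) = (b', a + c)) : mapVx σ (lineForm b : 𝔸) = lineForm b' := by
  simp only [lineForm, map_sum, map_mul, mapVx_vx, hσ, add_right_comm _ (1 : ZMod p) c]
  exact Equiv.sum_comp (Equiv.addRight c) fun a => (vx (b', a) * vx (b', a + 1) : 𝔸)

/-- The fundamental class of the boundary of the simplex spanned by a line. -/
noncomputable def topForm (b : B) : VertexAlgebra (ZMod p) (B × ZMod p) :=
  if p = 2 then ∑ a : ZMod p, vx (b, a) else lineForm b ^ ((p - 1) / 2)

theorem neg_eq_self_of_two (hp : p = 2) (x : 𝔸) : -x = x := by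
  have h : (-1 : ZMod p) = 1 := by subst hp; rfl
  rw [← one_smul (ZMod p) x, ← neg_smul, h]

theorem commute_topForm (b : B) (x : 𝔸) : Commute (topForm b) x := by
  rw [topForm]
  split_ifs with hp
  · refine commute_of_vx (fun v => ?_) x
    refine Commute.sum_left _ _ _ fun a _ => ?_
    rw [commute_iff_eq, vx_anticomm, neg_eq_self_of_two hp]
  · exact (commute_lineForm b x).pow_left _

theorem bdry_topForm_mul (b : B) (x : 𝔸) :
    bdry _ _ (topForm b * x) = topForm b * bdry _ _ x := by
  rw [topForm]
  split_ifs with hp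
  · simp only [sum_mul, map_sum, bdry_vx_mul, sum_sub_distrib, sum_const, card_univ, ZMod.card]
    rw [← Nat.cast_smul_eq_nsmul (ZMod p), CharP.cast_eq_zero, zero_smul, zero_sub,
      neg_eq_self_of_two hp]
  · exact bdry_lineForm_pow_mul _ _ _

theorem ctr_topForm_mul {b : B} {v : B × ZMod p} (hv : v.1 ≠ b) (x : 𝔸) :
    ctr v (topForm b * x) = topForm b * ctr v x := by
  rw [topForm]
  split_ifs with hp
  · have h : ∀ a, (b, a) ≠ v := fun a h => hv (by rw [← h])
    simp only [sum_mul, map_sum, ctr_vx_mul_of_ne (h _), neg_eq_self_of_two hp]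
  · generalize (p - 1) / 2 = s
    induction s with
    | zero => simp
    | succ s ih => rw [pow_succ', mul_assoc, ctr_lineForm_mul hv, ih, mul_assoc]

theorem ctrs_topForm_mul {b : B} {l : List (B × ZMod p)} (hl : ∀ v ∈ l, v.1 ≠ b) (x : 𝔸) :
    ctrs l (topForm b * x) = topForm b * ctrs l x := by
  induction l with
  | nil => rfl
  | cons v l ih =>
    simp only [List.mem_cons, forall_eq_or_imp] at hl
    rw [ctrs_cons, ih hl.2, ctr_topForm_mul hl.1, ctrs_cons]

theorem mapVx_topForm {σ : B × ZMod p → B × ZMod p} {b b' : B} {c : ZMod p}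
    (hσ : ∀ a, σ (b, a) = (b', a + c)) : mapVx σ (topForm b : 𝔸) = topForm b' := by
  rw [topForm, topForm]
  split_ifs with hp
  · simp only [map_sum, mapVx_vx, hσ]
    exact Equiv.sum_comp (Equiv.addRight c) fun a => (vx (b', a) : 𝔸)
  · rw [map_pow, mapVx_lineForm hσ]

/-! ### Filtration by the number of vertices on a line -/

/-- Chains whose simplices have at most `s` vertices on the line `b`. -/
noncomputable def lineDeg (b : B) : ℕ → Submodule (ZMod p) (VertexAlgebra (ZMod p) (B × ZMod p))
  | 0 => ⨅ a : ZMod p, LinearMap.ker (ctr (b, a))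
  | s + 1 => ⨅ a : ZMod p, (lineDeg b s).comap (ctr (b, a))

theorem mem_lineDeg_zero {b : B} {x : 𝔸} : x ∈ lineDeg b 0 ↔ ∀ a, ctr (b, a) x = 0 := by
  simp [lineDeg]

theorem mem_lineDeg_succ {b : B} {s : ℕ} {x : 𝔸} :
    x ∈ lineDeg b (s + 1) ↔ ∀ a, ctr (b, a) x ∈ lineDeg b s := by
  simp [lineDeg]

theorem lineDeg_succ_le (b : B) (s : ℕ) :
    lineDeg b s ≤ (lineDeg b (s + 1) : Submodule (ZMod p) 𝔸) := by
  induction s with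
  | zero =>
    intro x hx
    rw [mem_lineDeg_succ]
    intro a
    rw [mem_lineDeg_zero.1 hx a]
    exact Submodule.zero_mem _
  | succ s ih =>
    intro x hx
    rw [mem_lineDeg_succ] at hx ⊢
    exact fun a => ih (hx a)

theorem lineDeg_mono (b : B) : Monotone (lineDeg b : ℕ → Submodule (ZMod p) 𝔸) :=
  monotone_nat_of_le_succ (lineDeg_succ_le b)

theorem one_mem_lineDeg (b : B) (s : ℕ) : (1 : 𝔸) ∈ lineDeg b s :=
  lineDeg_mono b (Nat.zero_le s) (mem_lineDeg_zero.2 fun _ => ctr_one _)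

theorem vx_mul_mem_lineDeg {b : B} {s : ℕ} {x : 𝔸} (hx : x ∈ lineDeg b s) (v : B × ZMod p) :
    vx v * x ∈ lineDeg b (s + 1) := by
  classical
  induction s generalizing x with
  | zero =>
    rw [mem_lineDeg_succ]
    intro a
    rw [ctr_vx_mul, mem_lineDeg_zero.1 hx a, mul_zero, sub_zero]
    split_ifs
    exacts [hx, Submodule.zero_mem _]
  | succ s ih =>
    rw [mem_lineDeg_succ]
    intro a
    rw [ctr_vx_mul]
    refine Submodule.sub_mem _ ?_ (ih (mem_lineDeg_succ.1 hx a))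
    split_ifs
    exacts [hx, Submodule.zero_mem _]

theorem vx_mul_mem_lineDeg_of_ne {b : B} {s : ℕ} {x : 𝔸} (hx : x ∈ lineDeg b s) {v : B × ZMod p}
    (hv : v.1 ≠ b) : vx v * x ∈ lineDeg b s := by
  have hne : ∀ a, v ≠ (b, a) := fun a h => hv (by rw [h])
  induction s generalizing x with
  | zero =>
    rw [mem_lineDeg_zero] at hx ⊢
    intro a
    rw [ctr_vx_mul_of_ne (hne a), hx a, mul_zero, neg_zero]
  | succ s ih =>
    rw [mem_lineDeg_succ] at hx ⊢
    intro a
    rw [ctr_vx_mul_of_ne (hne a)]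
    exact Submodule.neg_mem _ (ih (hx a))

theorem lineForm_pow_mul_mem_lineDeg {b : B} {s : ℕ} {x : 𝔸} (hx : x ∈ lineDeg b s) (t : ℕ) :
    lineForm b ^ t * x ∈ lineDeg b (s + 2 * t) := by
  induction t with
  | zero => simpa using hx
  | succ t ih =>
    rw [pow_succ', mul_assoc, lineForm, sum_mul]
    refine Submodule.sum_mem _ fun a _ => ?_
    rw [mul_assoc]
    exact vx_mul_mem_lineDeg (vx_mul_mem_lineDeg ih _) _

theorem lineForm_pow_mul_mem_lineDeg_of_ne {b b' : B} (h : b' ≠ b) {s : ℕ} {x : 𝔸}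
    (hx : x ∈ lineDeg b s) (t : ℕ) : lineForm b' ^ t * x ∈ lineDeg b s := by
  induction t with
  | zero => simpa using hx
  | succ t ih =>
    rw [pow_succ', mul_assoc, lineForm, sum_mul]
    refine Submodule.sum_mem _ fun a _ => ?_
    rw [mul_assoc]
    exact vx_mul_mem_lineDeg_of_ne (vx_mul_mem_lineDeg_of_ne ih h) h

theorem topForm_mul_mem_lineDeg {b : B} {s : ℕ} {x : 𝔸} (hx : x ∈ lineDeg b s) :
    topForm b * x ∈ lineDeg b (s + (p - 1)) := by
  rw [topForm]
  split_ifs with hp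
  · rw [sum_mul]
    refine Submodule.sum_mem _ fun a _ => lineDeg_mono b ?_ (vx_mul_mem_lineDeg hx _)
    lia
  · exact lineDeg_mono b (by lia) (lineForm_pow_mul_mem_lineDeg hx _)

theorem topForm_mul_mem_lineDeg_of_ne {b b' : B} (h : b' ≠ b) {s : ℕ} {x : 𝔸}
    (hx : x ∈ lineDeg b s) : topForm b' * x ∈ lineDeg b s := by
  rw [topForm]
  split_ifs with hp
  · rw [sum_mul]
    exact Submodule.sum_mem _ fun a _ => vx_mul_mem_lineDeg_of_ne hx h
  · exact lineForm_pow_mul_mem_lineDeg_of_ne h hx _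

theorem ctrs_eq_zero_of_mem_lineDeg {b : B} {s : ℕ} {x : 𝔸} (hx : x ∈ lineDeg b s)
    {l : List (B × ZMod p)} (hl : ∀ v ∈ l, v.1 = b) (hs : s < l.length) : ctrs l x = 0 := by
  induction l generalizing s x with
  | nil => simp at hs
  | cons v l ih =>
    simp only [List.mem_cons, forall_eq_or_imp] at hl
    obtain ⟨rfl, hl⟩ := hl
    rw [List.length_cons] at hs
    cases s with
    | zero => exact ctrs_eq_zero_of_ctr (v := v) (by simp) (mem_lineDeg_zero.1 hx v.2)
    | succ s =>
      have h := ih (mem_lineDeg_succ.1 hx v.2) hl (by lia)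
      rw [Prod.mk.eta] at h
      have h2 : ctrs (l ++ [v]) x = 0 := by rw [ctrs_append]; exact h
      exact ctrs_perm (List.perm_append_singleton v l) h2

theorem ctrs_line_eq_zero {b : B} {s : ℕ} (hs : s < p) {x : 𝔸} (hx : x ∈ lineDeg b s) :
    ctrs (line p b) x = 0 :=
  ctrs_eq_zero_of_mem_lineDeg hx (fun v hv => (mem_line b v).1 hv) (by
    rw [line_eq, List.length_map, List.length_range]; exact hs)

/-! ### The top contraction of the fundamental class of a line -/

theorem vx_mul_path_pow (b : B) (m : ℕ) :
    vx (b, 0) * (∑ j ∈ range m, ((vx (b, ((2 * j : ℕ) : ZMod p)) *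
        vx (b, ((2 * j + 1 : ℕ) : ZMod p)) + vx (b, ((2 * j + 1 : ℕ) : ZMod p)) *
        vx (b, ((2 * j + 2 : ℕ) : ZMod p)) : 𝔸))) ^ m =
      (m.factorial : ZMod p) •
        (((List.range (2 * m + 1)).map fun t : ℕ => (b, (t : ZMod p))).map vx).prod := by
  induction m with
  | zero => simp [List.range_succ]
  | succ m ih =>
    set P : 𝔸 := ∑ j ∈ range m, (vx (b, ((2 * j : ℕ) : ZMod p)) *
        vx (b, ((2 * j + 1 : ℕ) : ZMod p)) + vx (b, ((2 * j + 1 : ℕ) : ZMod p)) *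
        vx (b, ((2 * j + 2 : ℕ) : ZMod p))) with hP
    set l : List (B × ZMod p) := (List.range (2 * m + 1)).map fun t : ℕ => (b, (t : ZMod p)) with hl
    have hzero : ∀ t < 2 * m + 1, ((l.map vx).prod * vx (b, (t : ZMod p)) : 𝔸) = 0 := fun t ht =>
      list_prod_mul_vx_of_mem (List.mem_map.2 ⟨t, List.mem_range.2 ht, rfl⟩)
    have hlP : ((l.map vx).prod * P : 𝔸) = 0 := by
      rw [hP, mul_sum]
      refine sum_eq_zero fun j hj => ?_
      have := Finset.mem_range.1 hj
      rw [mul_add, ← mul_assoc, ← mul_assoc, hzero _ (by lia), hzero _ (by lia)]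
      simp
    have hrange : ((((List.range (2 * (m + 1) + 1)).map fun t : ℕ => (b, (t : ZMod p))).map
        vx).prod : 𝔸) = (l.map vx).prod * (vx (b, ((2 * m + 1 : ℕ) : ZMod p)) *
          vx (b, ((2 * m + 2 : ℕ) : ZMod p))) := by
      rw [show 2 * (m + 1) + 1 = 2 * m + 1 + 1 + 1 by ring, List.range_succ, List.range_succ]
      simp [hl]
    set x : 𝔸 := vx (b, ((2 * m : ℕ) : ZMod p)) * vx (b, ((2 * m + 1 : ℕ) : ZMod p)) +
      vx (b, ((2 * m + 1 : ℕ) : ZMod p)) * vx (b, ((2 * m + 2 : ℕ) : ZMod p)) with hx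
    have hxc : Commute P x := ((commute_vx_mul_vx _ _ P).add_left (commute_vx_mul_vx _ _ P)).symm
    have hxx : x * x = 0 := by
      have h : x = vx (b, ((2 * m + 1 : ℕ) : ZMod p)) *
          (vx (b, ((2 * m + 2 : ℕ) : ZMod p)) - vx (b, ((2 * m : ℕ) : ZMod p))) := by
        rw [hx, vx_anticomm, mul_sub]; abel
      have hc : Commute x (vx (b, ((2 * m + 1 : ℕ) : ZMod p))) :=
        (commute_vx_mul_vx _ _ _).add_left (commute_vx_mul_vx _ _ _)
      nth_rw 2 [h]
      rw [← mul_assoc, hc.eq, h, vx_mul_vx_mul_self, zero_mul]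
    rw [sum_range_succ, ← hP, ← hx, add_pow_of_mul_self_eq_zero hxc hxx, mul_add, mul_smul_comm,
      ← mul_assoc, ih, pow_succ, ← mul_assoc, ih, smul_mul_assoc, hlP, smul_zero, zero_add,
      hrange, smul_mul_assoc, hx, mul_add, ← mul_assoc, hzero _ (by lia), zero_mul, zero_add,
      ← Nat.cast_smul_eq_nsmul (ZMod p), smul_smul, Nat.factorial_succ]
    push_cast
    rfl

theorem vx_mul_lineForm_pow (b : B) (t s : ℕ) (hp : p = 2 * t + 1) :
    (vx (b, 0) * lineForm b ^ s : 𝔸) =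
      vx (b, 0) * (∑ j ∈ range t, ((vx (b, ((2 * j : ℕ) : ZMod p)) *
        vx (b, ((2 * j + 1 : ℕ) : ZMod p)) + vx (b, ((2 * j + 1 : ℕ) : ZMod p)) *
        vx (b, ((2 * j + 2 : ℕ) : ZMod p))))) ^ s := by
  set P : 𝔸 := ∑ j ∈ range t, (vx (b, ((2 * j : ℕ) : ZMod p)) *
        vx (b, ((2 * j + 1 : ℕ) : ZMod p)) + vx (b, ((2 * j + 1 : ℕ) : ZMod p)) *
        vx (b, ((2 * j + 2 : ℕ) : ZMod p))) with hP
  have hw : (lineForm b : 𝔸) = P + vx (b, ((2 * t : ℕ) : ZMod p)) * vx (b, 0) := by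
    have h1 : (lineForm b : 𝔸) =
        ∑ j ∈ range p, vx (b, (j : ZMod p)) * vx (b, (j : ZMod p) + 1) := by
      rw [lineForm]
      symm
      refine sum_bij (fun (j : ℕ) _ => (j : ZMod p)) (fun _ _ => mem_univ _) ?_ ?_ fun _ _ => rfl
      · intro i hi j hj h
        have := congrArg ZMod.val h
        rwa [ZMod.val_cast_of_lt (Finset.mem_range.1 hi),
          ZMod.val_cast_of_lt (Finset.mem_range.1 hj)] at this
      · intro a _
        exact ⟨a.val, Finset.mem_range.2 a.val_lt, by simp⟩
    have h2 : ∀ n : ℕ, ∑ j ∈ range (2 * n), (vx (b, (j : ZMod p)) * vx (b, (j : ZMod p) + 1) : 𝔸) =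
        ∑ j ∈ range n, (vx (b, ((2 * j : ℕ) : ZMod p)) *
        vx (b, ((2 * j + 1 : ℕ) : ZMod p)) + vx (b, ((2 * j + 1 : ℕ) : ZMod p)) *
        vx (b, ((2 * j + 2 : ℕ) : ZMod p))) := by
      intro n
      induction n with
      | zero => simp
      | succ n ih =>
        rw [show 2 * (n + 1) = 2 * n + 1 + 1 by ring, sum_range_succ, sum_range_succ, ih,
          sum_range_succ, add_assoc]
        push_cast
        simp only [add_assoc, one_add_one_eq_two]
    have h3 : ((2 * t : ℕ) : ZMod p) + 1 = 0 := by
      have := (CharP.cast_eq_zero_iff (ZMod p) p (2 * t + 1)).2 (dvd_of_eq hp)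
      exact_mod_cast this
    have h4 : range p = range (2 * t + 1) := by rw [hp]
    rw [h1, h4, sum_range_succ, h2, h3]
  induction s with
  | zero => simp
  | succ s ih =>
    have h : (vx (b, 0) * lineForm b : 𝔸) = vx (b, 0) * P := by
      rw [hw, mul_add, vx_anticomm (b, ((2 * t : ℕ) : ZMod p)), mul_neg, vx_mul_vx_mul_self,
        neg_zero, add_zero]
    have hPc : Commute P (vx (b, 0) : 𝔸) := Commute.sum_left _ _ _ fun j _ =>
      (commute_vx_mul_vx _ _ _).add_left (commute_vx_mul_vx _ _ _)
    rw [pow_succ', ← mul_assoc, h, ← hPc.eq, mul_assoc, ih, ← mul_assoc, hPc.eq, mul_assoc,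
      ← pow_succ']

theorem vx_mul_topForm (b : B) : ∃ c : ZMod p, c ≠ 0 ∧
    (vx (b, 0) * topForm b : 𝔸) = c • (vx (b, 0) * ((lineTail p b).map vx).prod) := by
  have hline : (vx (b, 0) * ((lineTail p b).map vx).prod : 𝔸) = ((line p b).map vx).prod := by
    simp [line]
  rw [hline, line_eq, topForm]
  split_ifs with hp
  · refine ⟨1, one_ne_zero, ?_⟩
    subst hp
    rw [show (univ : Finset (ZMod 2)) = {0, 1} from rfl, sum_pair zero_ne_one]
    simp [List.range_succ, mul_add]
  · have hodd : p = 2 * ((p - 1) / 2) + 1 := by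
      have := (Nat.Prime.eq_two_or_odd (Fact.out : p.Prime)).resolve_left hp
      lia
    refine ⟨(((p - 1) / 2).factorial : ZMod p), ?_, ?_⟩
    · rw [Ne, CharP.cast_eq_zero_iff (ZMod p) p, (Fact.out : p.Prime).dvd_factorial]
      have := (Fact.out : p.Prime).pos
      lia
    · rw [vx_mul_lineForm_pow b _ _ hodd, vx_mul_path_pow, ← hodd]

theorem ctrs_lineTail_topForm (b : B) : ∃ κ : ZMod p, κ ≠ 0 ∧
    ctrs (lineTail p b) (topForm b : 𝔸) = algebraMap (ZMod p) 𝔸 κ := by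
  have hnd := nodup_line (p := p) b
  rw [line, List.nodup_cons] at hnd
  obtain ⟨κ, hκ⟩ : ∃ κ : ZMod p, ctrs (lineTail p b) (topForm b : 𝔸) = algebraMap (ZMod p) 𝔸 κ := by
    refine exists_algebraMap_of_ctr_eq_zero fun v => ?_
    by_cases hv : v.1 = b
    · rcases List.mem_cons.1 ((mem_line b v).2 hv) with rfl | h
      · have := ctrs_line_eq_zero (Nat.sub_lt (Fact.out : p.Prime).pos one_pos)
          (by simpa using topForm_mul_mem_lineDeg (one_mem_lineDeg b 0) :
            (topForm b : 𝔸) ∈ lineDeg b (p - 1))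
        exact this
      · exact ctr_ctrs_of_mem h _
    · have h1 : ctr v (topForm b : 𝔸) = 0 := by
        have := ctr_topForm_mul hv (1 : 𝔸)
        simpa using this
      have h2 := ctrs_eq_zero_of_ctr (l := v :: lineTail p b) (by simp) h1
      exact h2
  refine ⟨κ, ?_, hκ⟩
  rintro rfl
  obtain ⟨c, hc, h⟩ := vx_mul_topForm (p := p) b
  have h1 := congrArg (ctrs (lineTail p b)) h
  obtain ⟨e, he⟩ := ctrs_list_prod (F := ZMod p) hnd.2
  rw [ctrs_vx_mul hnd.1, hκ, map_smul, ctrs_vx_mul hnd.1, he, map_zero, mul_zero, smul_zero,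
    mul_smul_comm, mul_one, smul_smul, smul_smul] at h1
  have h2 := congrArg (ctr (b, (0 : ZMod p))) h1
  classical
  rw [map_zero, map_smul, ctr_vx, if_pos rfl, ← Algebra.algebraMap_eq_smul_one,
    ← map_zero (algebraMap (ZMod p) 𝔸), ExteriorAlgebra.algebraMap_inj] at h2
  simp [hc] at h2

end LineForm

end VertexAlgebra

/-- A set of lines, with levels, on which the group `(ZMod p) ^ k` acts in such a way that the
coordinates up to the level of a line fix that line. -/
structure LineSystem (p k : ℕ) (B : Type*) where
  /-- The level of a line. -/
  lev : B → Fin k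
  /-- The action on lines. -/
  tr : (Fin k → ZMod p) → B → B
  tr_zero : ∀ b, tr 0 b = b
  tr_add : ∀ g h b, tr (g + h) b = tr g (tr h b)
  lev_tr : ∀ g b, lev (tr g b) = lev b
  tr_single : ∀ j t b, j ≤ lev b → tr (Pi.single j t) b = b

namespace LineSystem

open VertexAlgebra

variable {p k : ℕ} {B : Type*} (S : LineSystem p k B)

/-- The action on the vertices of the lines. The coordinate indexed by the level of a line rotates
that line. -/
def move (g : Fin k → ZMod p) (v : B × ZMod p) : B × ZMod p :=
  (S.tr g v.1, v.2 + g (S.lev v.1))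

theorem move_zero : S.move 0 = id := by
  ext v <;> simp [move, S.tr_zero]

theorem move_add (g h : Fin k → ZMod p) : S.move (g + h) = S.move g ∘ S.move h := by
  ext v
  · simp [move, S.tr_add]
  · simp [move, S.lev_tr, add_comm (g _), add_assoc]

theorem move_neg_move (g : Fin k → ZMod p) (v : B × ZMod p) : S.move (-g) (S.move g v) = v := by
  rw [← Function.comp_apply (f := S.move (-g)), ← S.move_add, neg_add_cancel, S.move_zero, id]

theorem move_injective (g : Fin k → ZMod p) : (S.move g).Injective :=
  Function.LeftInverse.injective (S.move_neg_move g)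

theorem tr_tr_neg (g : Fin k → ZMod p) (b : B) : S.tr g (S.tr (-g) b) = b := by
  rw [← S.tr_add, add_neg_cancel, S.tr_zero]

theorem move_single {j : Fin k} {b : B} (h : j < S.lev b) (t a : ZMod p) :
    S.move (Pi.single j t) (b, a) = (b, a + 0) := by
  simp [move, S.tr_single j t b h.le, h.ne']

theorem move_single_lev (b : B) (t a : ZMod p) :
    S.move (Pi.single (S.lev b) t) (b, a) = (b, a + t) := by
  simp [move, S.tr_single _ t b le_rfl]

/-- The chains on the vertices of the lines. -/
noncomputable def chains : EquivComplex p k (VertexAlgebra (ZMod p) (B × ZMod p)) where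
  d := bdry _ _
  act g := (mapVx (S.move g)).toLinearMap
  d_d := bdry_bdry
  act_zero x := by simp [S.move_zero, mapVx_id]
  act_add g h x := by simp [S.move_add, mapVx_comp]
  d_act g x := bdry_mapVx _ x

local notation "𝔸" => VertexAlgebra (ZMod p) (B × ZMod p)

@[simp] theorem chains_d (x : 𝔸) : S.chains.d x = bdry _ _ x := rfl

@[simp] theorem chains_act (g : Fin k → ZMod p) (x : 𝔸) :
    S.chains.act g x = mapVx (S.move g) x := rfl

theorem act_mem_deleted [NeZero p] (g : Fin k → ZMod p) {x : 𝔸} (hx : x ∈ deleted p B) :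
    S.chains.act g x ∈ deleted p B :=
  mapVx_mem_deleted (S.move_injective g) (fun b => ⟨S.tr (-g) b, fun _ => S.tr_tr_neg g b⟩) hx

variable [Fact p.Prime]

/-- The chains on a single line that form a truncated periodic resolution. -/
noncomputable def lineChain (b : B) (s : ℤ) : 𝔸 :=
  if 0 ≤ s ∧ s + 2 ≤ p then
    intSign p (s / 2) • (lineForm b ^ (s / 2).toNat *
      if Even s then vx (b, 0) else vx (b, 0) * vx (b, 1))
  else 0

theorem lineChain_of_neg (b : B) {s : ℤ} (hs : s < 0) : (lineChain b s : 𝔸) = 0 :=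
  if_neg fun h => absurd h.1 hs.not_ge

theorem lineChain_of_lt (b : B) {s : ℤ} (hs : (p : ℤ) < s + 2) : (lineChain b s : 𝔸) = 0 :=
  if_neg fun h => absurd h.2 hs.not_ge

theorem lineChain_even (b : B) {t : ℕ} (ht : 2 * t + 2 ≤ p) :
    (lineChain b (2 * t) : 𝔸) = intSign p t • (lineForm b ^ t * vx (b, 0)) := by
  have h : (2 * (t : ℤ)) / 2 = t := by lia
  rw [lineChain, if_pos (by lia), if_pos (even_two_mul _), h, Int.toNat_natCast]

theorem lineChain_odd (b : B) {t : ℕ} (ht : 2 * t + 3 ≤ p) :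
    (lineChain b (2 * t + 1) : 𝔸) = intSign p t • (lineForm b ^ t * (vx (b, 0) * vx (b, 1))) := by
  have h : (2 * (t : ℤ) + 1) / 2 = t := by lia
  rw [lineChain, if_pos (by lia), if_neg (by simp), h, Int.toNat_natCast]

theorem lineChain_mem_lineDeg (b : B) (s : ℤ) : (lineChain b s : 𝔸) ∈ lineDeg b (p - 1) := by
  rw [lineChain]
  split_ifs with h1 h2
  · refine Submodule.smul_mem _ _ (lineDeg_mono b (a := 1 + 2 * (s / 2).toNat) (by lia) ?_)
    refine lineForm_pow_mul_mem_lineDeg ?_ _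
    simpa using vx_mul_mem_lineDeg (one_mem_lineDeg b 0) (b, 0)
  · refine Submodule.smul_mem _ _ (lineDeg_mono b (a := 2 + 2 * (s / 2).toNat) ?_ ?_)
    · obtain ⟨t, rfl⟩ := Int.not_even_iff_odd.1 h2
      lia
    refine lineForm_pow_mul_mem_lineDeg ?_ _
    refine vx_mul_mem_lineDeg ?_ _
    simpa using vx_mul_mem_lineDeg (one_mem_lineDeg b 0) (b, 1)
  · exact Submodule.zero_mem _

theorem lineChain_mem_lineDeg_of_ne {b b' : B} (h : b ≠ b') (s : ℤ) :
    (lineChain b s : 𝔸) ∈ lineDeg b' 0 := by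
  rw [lineChain]
  split_ifs with h1 h2
  · refine Submodule.smul_mem _ _ (lineForm_pow_mul_mem_lineDeg_of_ne h ?_ _)
    simpa using vx_mul_mem_lineDeg_of_ne (one_mem_lineDeg b' 0) (v := (b, 0)) h
  · refine Submodule.smul_mem _ _ (lineForm_pow_mul_mem_lineDeg_of_ne h ?_ _)
    refine vx_mul_mem_lineDeg_of_ne ?_ h
    simpa using vx_mul_mem_lineDeg_of_ne (one_mem_lineDeg b' 0) (v := (b, 1)) h
  · exact Submodule.zero_mem _

theorem mapVx_lineChain {σ : B × ZMod p → B × ZMod p} {b : B} (hσ : ∀ a, σ (b, a) = (b, a + 0))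
    (s : ℤ) : mapVx σ (lineChain b s : 𝔸) = lineChain b s := by
  simp only [lineChain]
  split_ifs <;> simp [mapVx_lineForm hσ, hσ]

theorem act_lineForm_pow_mul (b : B) (t : ZMod p) (n : ℕ) (x : 𝔸) :
    S.chains.act (Pi.single (S.lev b) t) (lineForm b ^ n * x) =
      lineForm b ^ n * S.chains.act (Pi.single (S.lev b) t) x := by
  simp [mapVx_lineForm (S.move_single_lev b t)]

theorem intSign_ne_zero (n : ℤ) : intSign p n ≠ 0 := fun h => by
  have := intSign_mul_self p n
  simp [h] at this

theorem lineChain_identity (b : B) : ∃ ε : ZMod p, ε ≠ 0 ∧ ∀ s : ℤ,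
    intSign p s • bdry _ _ (lineChain b s : 𝔸) +
      S.chains.per (S.lev b) s (lineChain b (s - 1)) =
      (if s = 0 then 1 else 0) + if s = p - 1 then ε • topForm b else 0 := by
  have h2 : 2 ≤ p := (Fact.out : p.Prime).two_le
  have hodd : ∀ t : ℕ, 2 * t + 2 ≤ p → S.chains.per (S.lev b) (2 * t + 1) (lineChain b (2 * t)) =
      intSign p t • (lineForm b ^ t * (vx (b, 1) - vx (b, 0))) := fun t ht => by
    rw [S.chains.per_of_odd _ (odd_two_mul_add_one _), lineChain_even b ht, map_smul,
      S.act_lineForm_pow_mul, mul_sub, smul_sub]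
    simp [S.move_single_lev]
  have heven : ∀ t : ℕ, 2 * t + 3 ≤ p →
      S.chains.per (S.lev b) (2 * t + 2) (lineChain b (2 * t + 1)) =
        intSign p t • (lineForm b ^ (t + 1) : 𝔸) := fun t ht => by
    rw [S.chains.per_of_even _ (by simp [parity_simps]), lineChain_odd b ht]
    simp only [map_smul, S.act_lineForm_pow_mul, ← smul_sum, ← mul_sum, pow_succ]
    congr 2
    simp [S.move_single_lev, lineForm, add_comm (1 : ZMod p)]
  have hdodd : ∀ t : ℕ, bdry _ _ (lineForm b ^ t * (vx (b, 0) * vx (b, 1)) : 𝔸) =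
      lineForm b ^ t * (vx (b, 1) - vx (b, 0)) := fun t => by
    rw [bdry_lineForm_pow_mul, bdry_vx_mul, bdry_vx, mul_one]
  have hdeven : ∀ t : ℕ, bdry _ _ (lineForm b ^ t * vx (b, 0) : 𝔸) = lineForm b ^ t := fun t => by
    rw [bdry_lineForm_pow_mul, bdry_vx, mul_one]
  refine ⟨if p = 2 then 1 else intSign p ((p - 1) / 2 - 1 : ℕ), ?_, fun s => ?_⟩
  · split_ifs
    exacts [one_ne_zero, intSign_ne_zero _]
  rcases lt_or_ge s 0 with hs | hs
  · rw [lineChain_of_neg b hs, lineChain_of_neg b (by lia), if_neg hs.ne, if_neg (by lia)]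
    simp
  rcases le_or_gt (p : ℤ) s with hs' | hs'
  · rw [lineChain_of_lt b (by lia), lineChain_of_lt b (by lia), if_neg (by lia), if_neg (by lia)]
    simp
  rcases hs.eq_or_lt with rfl | hs0
  · rw [lineChain_of_neg b (s := 0 - 1) (by lia), if_pos rfl, if_neg (by lia)]
    have := lineChain_even (p := p) b (t := 0) (by lia)
    simp only [Nat.cast_zero, mul_zero] at this
    simp [this]
  rw [if_neg hs0.ne', zero_add]
  rcases Int.even_or_odd' s with ⟨t, rfl | rfl⟩
  · obtain ⟨t, rfl⟩ : ∃ u : ℕ, t = u + 1 := ⟨(t - 1).toNat, by lia⟩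
    have e1 : 2 * ((t : ℤ) + 1) = 2 * t + 2 := by ring
    have e2 : 2 * (t : ℤ) + 2 - 1 = 2 * t + 1 := by ring
    rw [e1, e2, heven t (by lia)]
    split_ifs with h hp
    · lia
    · rw [lineChain_of_lt b (by lia), map_zero, smul_zero, zero_add, topForm, if_neg hp]
      have : (p - 1) / 2 = t + 1 := by lia
      rw [this, Nat.add_sub_cancel]
    · have := lineChain_even (p := p) b (t := t + 1) (by lia)
      push_cast at this
      rw [← e1, this, map_smul, hdeven, intSign_of_even p (even_two_mul _), intSign_add,
        intSign_one, one_smul]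
      simp
  · obtain ⟨t, rfl⟩ : ∃ u : ℕ, t = u := ⟨t.toNat, by lia⟩
    rw [add_sub_cancel_right, hodd t (by lia)]
    split_ifs with h hp
    · have ht : t = 0 := by lia
      subst ht
      rw [lineChain_of_lt b (by lia), topForm, if_pos hp]
      subst hp
      rw [show (univ : Finset (ZMod 2)) = {0, 1} from rfl, sum_pair zero_ne_one]
      simp [sub_eq_add_neg, neg_eq_self_of_two, add_comm]
    · have := (Nat.Prime.eq_two_or_odd (Fact.out : p.Prime)).resolve_left hp
      lia
    · have hp2 : p ≠ 2 := by lia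
      have := (Nat.Prime.eq_two_or_odd (Fact.out : p.Prime)).resolve_left hp2
      rw [lineChain_odd b (by lia), map_smul, hdodd, intSign_of_odd p (odd_two_mul_add_one _)]
      simp

end LineSystem

namespace EquivComplex

variable {p k : ℕ} [Fact p.Prime]

theorem even_or_eq_two (q : ℤ) : Even (((p : ℤ) - 1) * q) ∨ p = 2 := by
  rcases (Fact.out : p.Prime).eq_two_or_odd' with h | h
  · exact Or.inr h
  · exact Or.inl ((((Int.odd_coe_nat p).2 h).sub_odd odd_one).mul_right q)

theorem intSign_mul (q : ℤ) : intSign p ((p - 1) * q) = 1 := by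
  rcases even_or_eq_two (p := p) q with h | rfl
  · exact intSign_of_even p h
  · rcases Int.even_or_odd (((2 : ℕ) - 1 : ℤ) * q) with h | h
    · exact intSign_of_even _ h
    · rw [intSign_of_odd _ h]; rfl

variable {M : Type*} [AddCommGroup M] [Module (ZMod p) M] (C : EquivComplex p k M)

theorem per_add_mul (i : Fin k) (a q : ℤ) (x : M) :
    C.per i (a + (p - 1) * q) x = C.per i a x := by
  rcases even_or_eq_two (p := p) q with h | rfl
  · rcases Int.even_or_odd a with ha | ha
    · rw [C.per_of_even i ha, C.per_of_even i (ha.add h)]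
    · rw [C.per_of_odd i ha, C.per_of_odd i (ha.add_even h)]
  · have key : ∑ t : ZMod 2, C.act (Pi.single i t) x = C.act (Pi.single i 1) x - x := by
      have hneg : -x = x := by
        rw [← neg_one_smul (ZMod 2), show (-1 : ZMod 2) = 1 from rfl, one_smul]
      rw [show (univ : Finset (ZMod 2)) = {0, 1} from rfl, sum_pair zero_ne_one, Pi.single_zero,
        C.act_zero, sub_eq_add_neg, hneg, add_comm]
    have h2 : ∀ b, C.per i b x = C.act (Pi.single i 1) x - x := fun b => by
      rcases Int.even_or_odd b with hb | hb
      · rw [C.per_of_even i hb, key]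
      · rw [C.per_of_odd i hb]
    rw [h2, h2]

end EquivComplex

namespace LineSystem

open VertexAlgebra

variable {p k : ℕ} {B : Type*} (S : LineSystem p k B)

/-- The dimension of the resolution carried by a set of lines in each direction. -/
def deg (Q : Finset B) (j : Fin k) : ℤ := (p - 1) * #{b ∈ Q | S.lev b = j}

@[simp] theorem deg_empty : S.deg (∅ : Finset B) = 0 := by
  ext j; simp [deg]

theorem deg_eq_zero {Q : Finset B} {j : Fin k} (h : ∀ b ∈ Q, S.lev b ≠ j) : S.deg Q j = 0 := by
  rw [deg, filter_eq_empty_iff.2 fun b hb => h b hb]; simp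

theorem deg_insert [DecidableEq B] {Q : Finset B} {b : B} (hb : b ∉ Q) :
    S.deg (insert b Q) = S.deg Q + Pi.single (S.lev b) ((p : ℤ) - 1) := by
  ext j
  rw [Pi.add_apply, deg, deg, filter_insert]
  split_ifs with h
  · subst h
    rw [card_insert_of_notMem (by simp [hb]), Pi.single_eq_same]
    push_cast; ring
  · rw [Pi.single_eq_of_ne (Ne.symm h), add_zero]

theorem sum_deg (Q : Finset B) (s : Finset (Fin k)) :
    ∃ q : ℤ, ∑ j ∈ s, S.deg Q j = (p - 1) * q :=
  ⟨_, (mul_sum s (fun j => (#{b ∈ Q | S.lev b = j} : ℤ)) ((p : ℤ) - 1)).symm⟩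

variable [Fact p.Prime]

local notation "𝔸" => VertexAlgebra (ZMod p) (B × ZMod p)

/-- The central element attached to a line. -/
noncomputable def topCentral (p : ℕ) [Fact p.Prime] {B : Type*} (b : B) :
    Submonoid.center (VertexAlgebra (ZMod p) (B × ZMod p)) :=
  ⟨topForm b, Semigroup.mem_center_iff.2 fun x => (commute_topForm b x).symm⟩

/-- The product of the central elements attached to a set of lines. -/
noncomputable def topProd (p : ℕ) [Fact p.Prime] {B : Type*} (Q : Finset B) :
    VertexAlgebra (ZMod p) (B × ZMod p) :=
  ((∏ b ∈ Q, topCentral p b : Submonoid.center (VertexAlgebra (ZMod p) (B × ZMod p))) :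
    VertexAlgebra (ZMod p) (B × ZMod p))

@[simp] theorem topProd_empty : topProd p (∅ : Finset B) = 1 := by simp [topProd]

theorem topProd_insert [DecidableEq B] {Q : Finset B} {b : B} (hb : b ∉ Q) :
    topProd p (insert b Q) = topForm b * topProd p Q := by
  simp [topProd, prod_insert hb, topCentral]

theorem topProd_mul_topForm [DecidableEq B] {Q : Finset B} {b : B} (hb : b ∉ Q) :
    topProd p Q * topForm b = topProd p (insert b Q) := by
  rw [topProd_insert hb, (commute_topForm b _).eq]

theorem bdry_topProd_mul (Q : Finset B) (x : 𝔸) :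
    bdry _ _ (topProd p Q * x) = topProd p Q * bdry _ _ x := by
  classical
  induction Q using Finset.induction_on generalizing x with
  | empty => simp
  | insert b Q hb ih => rw [topProd_insert hb, mul_assoc, bdry_topForm_mul, ih, mul_assoc]

theorem mapVx_topProd (g : Fin k → ZMod p) (Q : Finset B) :
    mapVx (S.move g) (topProd p Q : 𝔸) = ((∏ b ∈ Q, topCentral p (S.tr g b) :
      Submonoid.center (VertexAlgebra (ZMod p) (B × ZMod p))) : 𝔸) := by
  classical
  induction Q using Finset.induction_on with
  | empty => simp
  | insert b Q hb ih =>
    rw [topProd_insert hb, map_mul, ih, prod_insert hb,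
      mapVx_topForm (b' := S.tr g b) (c := g (S.lev b)) fun a => rfl]
    rfl

theorem mapVx_topProd_univ [Fintype B] (g : Fin k → ZMod p) :
    mapVx (S.move g) (topProd p (univ : Finset B) : 𝔸) = topProd p univ := by
  rw [mapVx_topProd, topProd]
  congr 1
  refine Function.Bijective.prod_comp (e := S.tr g) ⟨fun b b' h => ?_, fun b => ?_⟩ (topCentral p)
  · have := congrArg (S.tr (-g)) h
    simpa [← S.tr_add, S.tr_zero] using this
  · exact ⟨S.tr (-g) b, S.tr_tr_neg g b⟩

theorem mapVx_single_topProd {Q : Finset B} {i : Fin k} (h : ∀ b ∈ Q, i ≤ S.lev b) (t : ZMod p) :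
    mapVx (S.move (Pi.single i t)) (topProd p Q : 𝔸) = topProd p Q := by
  rw [mapVx_topProd, topProd]
  congr 1
  exact prod_congr rfl fun b hb => by rw [S.tr_single i t b (h b hb)]

theorem per_topProd_mul {Q : Finset B} {i : Fin k} (h : ∀ b ∈ Q, i ≤ S.lev b) (a : ℤ) (x : 𝔸) :
    S.chains.per i a (topProd p Q * x) = topProd p Q * S.chains.per i a x := by
  rcases Int.even_or_odd a with ha | ha
  · simp [EquivComplex.per_of_even, ha, S.mapVx_single_topProd h, mul_sum]
  · simp [EquivComplex.per_of_odd, ha, S.mapVx_single_topProd h, mul_sub]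

theorem topProd_mul_mem_lineDeg [DecidableEq B] (Q : Finset B) {b : B} {s : ℕ} {x : 𝔸}
    (hx : x ∈ lineDeg b s) :
    topProd p Q * x ∈ lineDeg b (s + if b ∈ Q then p - 1 else 0) := by
  induction Q using Finset.induction_on with
  | empty => simpa using hx
  | insert b' Q hb ih =>
    rw [topProd_insert hb, mul_assoc]
    rcases eq_or_ne b b' with rfl | hne
    · rw [if_neg hb, add_zero] at ih
      simpa using topForm_mul_mem_lineDeg ih
    · simpa [hne] using topForm_mul_mem_lineDeg_of_ne hne.symm ih

theorem topProd_mem_deleted (Q : Finset B) : topProd p Q ∈ deleted p B := by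
  classical
  refine mem_deleted.2 fun b => ctrs_line_eq_zero (s := p - 1)
    (Nat.sub_lt (NeZero.pos p) one_pos) ?_
  have := topProd_mul_mem_lineDeg (p := p) Q (one_mem_lineDeg b 0)
  rw [mul_one] at this
  exact lineDeg_mono b (by split_ifs <;> lia) this

theorem topProd_mul_lineChain_mem_deleted {Q : Finset B} {b : B} (hb : b ∉ Q) (s : ℤ) :
    topProd p Q * lineChain b s ∈ deleted p B := by
  classical
  refine mem_deleted.2 fun b' => ctrs_line_eq_zero (s := p - 1)
    (Nat.sub_lt (NeZero.pos p) one_pos) ?_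
  rcases eq_or_ne b b' with rfl | hne
  · simpa [hb] using topProd_mul_mem_lineDeg Q (lineChain_mem_lineDeg b s)
  · exact lineDeg_mono b' (by split_ifs <;> lia)
      (topProd_mul_mem_lineDeg Q (lineChain_mem_lineDeg_of_ne hne s))

theorem exists_ctrs_prod_topForm {L : List B} (hL : L.Nodup) : ∃ κ : ZMod p, κ ≠ 0 ∧
    ctrs (L.flatMap (lineTail p)) (L.map topForm).prod = algebraMap (ZMod p) 𝔸 κ := by
  induction L with
  | nil => exact ⟨1, one_ne_zero, by simp⟩
  | cons b L ih =>
    rw [List.nodup_cons] at hL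
    obtain ⟨κ, hκ, h⟩ := ih hL.2
    obtain ⟨κ', hκ', h'⟩ := ctrs_lineTail_topForm (p := p) b
    refine ⟨κ * κ', mul_ne_zero hκ hκ', ?_⟩
    rw [List.flatMap_cons, ctrs_append, List.map_cons, List.prod_cons, ctrs_topForm_mul, h,
      Algebra.algebraMap_eq_smul_one, mul_smul_comm, mul_one, map_smul, h',
      map_mul, Algebra.smul_def]
    intro v hv hvb
    simp only [List.mem_flatMap, lineTail, List.mem_map] at hv
    obtain ⟨b', hb', t, -, rfl⟩ := hv
    exact hL.1 (hvb ▸ hb')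

theorem exists_ctrs_topProd_univ [Fintype B] : ∃ κ : ZMod p, κ ≠ 0 ∧
    ctrs (allTails p B) (topProd p univ) = algebraMap (ZMod p) 𝔸 κ := by
  obtain ⟨κ, hκ, h⟩ := exists_ctrs_prod_topForm (p := p) (nodup_toList (univ : Finset B))
  refine ⟨κ, hκ, ?_⟩
  rw [allTails, ← h, topProd, ← prod_map_toList, Submonoid.coe_list_prod, List.map_map]
  rfl

theorem deg_nonneg (Q : Finset B) (j : Fin k) : 0 ≤ S.deg Q j :=
  mul_nonneg (by have := NeZero.pos p; lia) (Int.natCast_nonneg _)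

open Classical in
/-- The family that extends a partial resolution over the line `b`. -/
noncomputable def stepFamily (Q : Finset B) (b : B) (α : Fin k → ℤ) : 𝔸 :=
  if ∀ j ≠ S.lev b, α j = S.deg Q j then
    topProd p Q * lineChain b (α (S.lev b) - S.deg Q (S.lev b)) else 0

theorem stepFamily_mem_deleted {Q : Finset B} {b : B} (hb : b ∉ Q) (α : Fin k → ℤ) :
    S.stepFamily Q b α ∈ deleted p B := by
  rw [stepFamily]
  split_ifs
  exacts [topProd_mul_lineChain_mem_deleted hb _, Submodule.zero_mem _]

theorem stepFamily_of_sum_neg {Q : Finset B} {b : B} {α : Fin k → ℤ} (hα : ∑ j, α j < 0) :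
    S.stepFamily Q b α = 0 := by
  rw [stepFamily]
  split_ifs with h
  · rw [lineChain_of_neg, mul_zero]
    by_contra! hc
    refine hα.not_ge (sum_nonneg fun j _ => ?_)
    have := S.deg_nonneg Q j
    rcases eq_or_ne j (S.lev b) with rfl | hj
    · lia
    · rwa [h j hj]
  · rfl

theorem per_stepFamily {Q : Finset B} {b : B} (hle : ∀ x ∈ Q, S.lev b ≤ S.lev x)
    {α : Fin k → ℤ} {j : Fin k} (hj : j ≠ S.lev b)
    (hα : S.lev b < j → α j ≠ S.deg Q j + 1) :
    S.chains.per j (α j) (S.stepFamily Q b (α - Pi.single j 1)) = 0 := by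
  rw [stepFamily]
  split_ifs with h
  · have hj' : α j = S.deg Q j + 1 := by
      have := h j hj
      simp only [Pi.sub_apply, Pi.single_eq_same] at this
      lia
    have hlt : j < S.lev b := (lt_or_gt_of_ne hj).resolve_right fun hgt => hα hgt hj'
    rw [S.deg_eq_zero fun x hx hxj => (hle x hx).not_gt (hxj ▸ hlt), zero_add] at hj'
    rw [hj', EquivComplex.per_of_odd _ _ odd_one, chains_act, map_mul,
      S.mapVx_single_topProd (fun x hx => hlt.le.trans (hle x hx)),
      mapVx_lineChain (S.move_single hlt 1), sub_self]
  · exact map_zero _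

theorem tot_stepFamily [Fintype B] [DecidableEq B] {Q : Finset B} {b : B} (hb : b ∉ Q)
    (hle : ∀ x ∈ Q, S.lev b ≤ S.lev x) (hup : ∀ y, S.lev b < S.lev y → y ∈ Q) :
    ∃ ε : ZMod p, ε ≠ 0 ∧ ∀ α ≤ S.deg univ, S.chains.tot (S.stepFamily Q b) α =
      (if α = S.deg Q then topProd p Q else 0) +
        if α = S.deg (insert b Q) then ε • topProd p (insert b Q) else 0 := by
  obtain ⟨ε, hε, h⟩ := S.lineChain_identity b
  refine ⟨ε, hε, fun α hα => ?_⟩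
  set i := S.lev b with hi
  have hlt : ∀ j, i < j → α j ≠ S.deg Q j + 1 := fun j hij hj => by
    have h1 : S.deg Q j = S.deg univ j := by
      rw [deg, deg]
      congr 3
      ext y
      simp only [mem_filter, mem_univ, true_and, and_iff_right_iff_imp]
      rintro rfl
      exact hup y hij
    have := hα j
    lia
  have hsum : ∑ j, intSign p (∑ l ∈ Iio j, α l) •
      S.chains.per j (α j) (S.stepFamily Q b (α - Pi.single j 1)) =
      intSign p (∑ l ∈ Iio i, α l) •
        S.chains.per i (α i) (S.stepFamily Q b (α - Pi.single i 1)) :=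
    sum_eq_single i (fun j _ hj => by rw [S.per_stepFamily hle hj (hlt j), smul_zero]) (by simp)
  rw [EquivComplex.tot_apply, hsum]
  by_cases hA : ∀ j ≠ i, α j = S.deg Q j
  · have hA' : ∀ j ≠ i, (α - Pi.single i 1 : Fin k → ℤ) j = S.deg Q j := fun j hj => by
      simp [hA j hj, hj]
    have e1 : intSign p (∑ j, α j) = intSign p (α i - S.deg Q i) := by
      have : ∑ j, α j = α i - S.deg Q i + ∑ j, S.deg Q j := by
        rw [← sub_eq_iff_eq_add, ← sum_sub_distrib, sum_eq_single i _ (by simp)]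
        exact fun j _ hj => by rw [hA j hj, sub_self]
      obtain ⟨q, hq⟩ := S.sum_deg Q univ
      rw [this, hq, intSign_add, EquivComplex.intSign_mul, mul_one]
    have e2 : intSign p (∑ j ∈ Iio i, α j) = 1 := by
      rw [sum_congr rfl fun j hj => hA j (mem_Iio.1 hj).ne]
      obtain ⟨q, hq⟩ := S.sum_deg Q (Iio i)
      rw [hq, EquivComplex.intSign_mul]
    have e3 : ∀ x, S.chains.per i (α i) x = S.chains.per i (α i - S.deg Q i) x := fun x => by
      have := S.chains.per_add_mul i (α i - S.deg Q i) (#{b ∈ Q | S.lev b = i}) x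
      rwa [← deg, sub_add_cancel] at this
    have e4 : (α = S.deg Q) ↔ α i - S.deg Q i = 0 :=
      ⟨fun h => by rw [h, sub_self], fun h => funext fun j => by
        rcases eq_or_ne j i with rfl | hj
        · lia
        · exact hA j hj⟩
    have e5 : (α = S.deg (insert b Q)) ↔ α i - S.deg Q i = p - 1 := by
      rw [S.deg_insert hb]
      refine ⟨fun h => by rw [h]; simp [hi], fun h => funext fun j => ?_⟩
      rcases eq_or_ne j i with rfl | hj
      · rw [Pi.add_apply, Pi.single_eq_same]; lia
      · rw [Pi.add_apply, Pi.single_eq_of_ne hj, add_zero, hA j hj]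
    rw [e1, e2, e3, one_smul, stepFamily, stepFamily, if_pos hA, if_pos hA', chains_d,
      bdry_topProd_mul, S.per_topProd_mul hle, ← mul_smul_comm, ← mul_add, Pi.sub_apply,
      Pi.single_eq_same, sub_right_comm, h, mul_add]
    simp only [e4, e5, mul_ite, mul_one, mul_zero, mul_smul_comm, topProd_mul_topForm hb]
  · have hA' : ¬ ∀ j ≠ i, (α - Pi.single i 1 : Fin k → ℤ) j = S.deg Q j := fun h => hA
      fun j hj => by simpa [hj] using h j hj
    rw [stepFamily, stepFamily, if_neg hA, if_neg hA', if_neg, if_neg]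
    · simp
    · rintro rfl
      refine hA fun j hj => ?_
      rw [S.deg_insert hb, Pi.add_apply, Pi.single_eq_of_ne hj, add_zero]
    · rintro rfl
      exact hA fun _ _ => rfl

theorem exists_family_tot [Fintype B] [DecidableEq B] (Q : Finset B)
    (hup : ∀ x ∈ Q, ∀ y, S.lev x < S.lev y → y ∈ Q) :
    ∃ ψ : (Fin k → ℤ) → 𝔸, ∃ c : ZMod p, c ≠ 0 ∧ (∀ α, ψ α ∈ deleted p B) ∧
      (∀ α, ∑ j, α j < 0 → ψ α = 0) ∧ ∀ α ≤ S.deg univ, S.chains.tot ψ α =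
        (if α = 0 then 1 else 0) + if α = S.deg Q then c • topProd p Q else 0 := by
  induction Q using Finset.induction_on_min_value S.lev with
  | empty =>
    refine ⟨0, -1, neg_ne_zero.2 one_ne_zero, fun _ => Submodule.zero_mem _, fun _ _ => rfl,
      fun α _ => ?_⟩
    rw [map_zero, deg_empty, topProd_empty]
    split_ifs <;> simp
  | insert b Q hb hle ih =>
    obtain ⟨ψ, c, hc, hψ, hψ0, h⟩ := ih fun x hx y hxy =>
      (mem_insert.1 (hup x (mem_insert_of_mem hx) y hxy)).resolve_left fun hy =>
        (hle x hx).not_gt (hy ▸ hxy)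
    obtain ⟨ε, hε, h'⟩ := S.tot_stepFamily hb hle fun y hy =>
      (mem_insert.1 (hup b (mem_insert_self _ _) y hy)).resolve_left fun hyb =>
        hy.ne (by rw [hyb])
    refine ⟨ψ - c • S.stepFamily Q b, -(c * ε), neg_ne_zero.2 (mul_ne_zero hc hε), fun α => ?_,
      fun α hα => ?_, fun α hα => ?_⟩
    · exact Submodule.sub_mem _ (hψ α) (Submodule.smul_mem _ _ (S.stepFamily_mem_deleted hb α))
    · simp [hψ0 α hα, S.stepFamily_of_sum_neg hα]
    · rw [map_sub, map_smul, Pi.sub_apply, Pi.smul_apply, h α hα, h' α hα, smul_add]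
      split_ifs <;> simp [mul_smul] <;> abel

/-- There is no equivariant family of chains, none of which contains a full line, that resolves the
unit up to the dimension of the line system. -/
theorem not_exists_family_deleted [Fintype B] (x : (Fin k → ℤ) → 𝔸)
    (hx : ∀ α, x α ∈ deleted p B) (hx0 : ∀ α, ∑ j, α j < 0 → x α = 0)
    (h : ∀ α ≤ S.deg univ, S.chains.tot x α = if α = 0 then 1 else 0) : False := by
  classical
  obtain ⟨ψ, c, hc, hψ, hψ0, hψt⟩ := S.exists_family_tot univ fun _ _ y _ => mem_univ y
  obtain ⟨κ, hκ, hΘκ⟩ := exists_ctrs_topProd_univ (p := p) (B := B)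
  have hdΘ : bdry _ _ (topProd p (univ : Finset B) : 𝔸) = 0 := by
    simpa using bdry_topProd_mul (p := p) (univ : Finset B) 1
  have ht : ∀ α ≤ S.deg univ, S.chains.tot (ψ - x) α =
      if α = S.deg univ then c • topProd p univ else 0 := fun α hα => by
    rw [map_sub, Pi.sub_apply, hψt α hα, h α hα, add_sub_cancel_left]
  refine hc (S.chains.tot_top_nontrivial (S := deleted p B) (Θ := topProd p univ)
    (fun g x hx => S.act_mem_deleted g hx) (fun x hx => bdry_mem_deleted hx)
    S.mapVx_topProd_univ hdΘ
    (fun z hz hdz => exists_eq_smul_add_bdry (topProd_mem_deleted _) hdΘ hκ hΘκ hz hdz)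
    (fun c w hw h => eq_zero_of_smul_eq_bdry hκ hΘκ c hw h) (S.deg univ) (ψ - x)
    (fun α => Submodule.sub_mem _ (hψ α) (hx α)) (fun α hα => by simp [hψ0 α hα, hx0 α hα]) c
    (fun α hα hlt => ?_) ?_)
  · rw [ht α hα, if_neg fun h => hlt.ne (by rw [h])]
  · rw [ht _ le_rfl, if_pos rfl]

end LineSystem

namespace EquivComplex

variable {p k : ℕ} [NeZero p] {M : Type*} [AddCommGroup M] [Module (ZMod p) M]
  (C : EquivComplex p k M)

/-- The acyclic carrier method: an invariant cycle of degree `0` is resolved equivariantly, provided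
contractions are available. -/
theorem exists_tot_eq (U : ℤ → Submodule (ZMod p) M) (h : ℤ → M →ₗ[ZMod p] M) (N : ℕ)
    (hd : ∀ s z, C.d (h s z) = z - h s (C.d z))
    (hmem : ∀ s : ℤ, 0 ≤ s → s ≤ N → ∀ z ∈ U s, h s z ∈ U (s + 1))
    (hact : ∀ s g, ∀ z ∈ U s, C.act g z ∈ U s) {η : M} (hη : η ∈ U 0)
    (hfix : ∀ g, C.act g η = η) (hdη : C.d η = 0) :
    ∃ x : (Fin k → ℤ) → M, (∀ α, x α ∈ U (∑ i, α i + 1)) ∧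
      (∀ α, ∑ i, α i < 0 ∨ (N : ℤ) < ∑ i, α i → x α = 0) ∧
      ∀ α : Fin k → ℤ, ∑ i, α i ≤ (N : ℤ) → C.tot x α = if α = 0 then η else 0 := by
  have htot0 : C.tot (fun α => if α = 0 then η else 0) = 0 := by
    have := C.tot_fixed hfix hdη fun α => if α = 0 then 1 else 0
    simpa [ite_smul] using this
  have main : ∀ s : ℕ, s ≤ N + 1 → ∃ x : (Fin k → ℤ) → M, (∀ α, x α ∈ U (∑ i, α i + 1)) ∧
      (∀ α, ∑ i, α i < 0 ∨ (s : ℤ) ≤ ∑ i, α i → x α = 0) ∧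
      ∀ α : Fin k → ℤ, ∑ i, α i < (s : ℤ) → C.tot x α = if α = 0 then η else 0 := by
    intro s
    induction s with
    | zero =>
      refine fun _ => ⟨0, fun α => Submodule.zero_mem _, fun _ _ => rfl, fun α hα => ?_⟩
      rw [if_neg]
      · simp
      · rintro rfl
        simp at hα
    | succ s ih =>
      intro hs
      obtain ⟨x, hxU, hx0, hxt⟩ := ih (by lia)
      set z : (Fin k → ℤ) → M := fun α => (if α = 0 then η else 0) - C.tot x α with hz
      have hsub : ∀ (α : Fin k → ℤ) i, ∑ j, α j = s →
          ∑ j, (α - Pi.single i 1 : Fin k → ℤ) j = s - 1 := fun α i hα => by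
        rw [sum_sub_single, hα]
      have hdz : ∀ α : Fin k → ℤ, ∑ i, α i = s → C.d (z α) = 0 := fun α hα => by
        have h1 : C.tot z α = 0 := by
          have : z = (fun α => if α = 0 then η else 0) - C.tot x := rfl
          rw [this, map_sub, htot0, C.tot_tot]; simp
        rw [C.d_eq_zero_of_tot fun i => by
          simp only [hz]
          rw [hxt _ (by rw [hsub α i hα]; lia), sub_self]] at h1
        have h2 := congrArg (fun x => intSign p (∑ i, α i) • x) h1
        simpa [smul_smul] using h2
      have hzU : ∀ α : Fin k → ℤ, ∑ i, α i = s → z α ∈ U s := fun α hα => by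
        refine Submodule.sub_mem _ ?_ ?_
        · split_ifs with h0
          · subst h0
            rw [← hα]
            simpa using hη
          · exact Submodule.zero_mem _
        · rw [C.tot_apply, hx0 α (by lia), map_zero, smul_zero, zero_add]
          refine Submodule.sum_mem _ fun i _ => Submodule.smul_mem _ _
            (C.per_mem (hact s) i _ ?_)
          have := hxU (α - Pi.single i 1)
          rwa [hsub α i hα, sub_add_cancel] at this
      refine ⟨fun α => if ∑ i, α i = s then intSign p s • h s (z α) else x α, fun α => ?_,
        fun α hα => ?_, fun α hα => ?_⟩
      · dsimp only
        split_ifs with hα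
        · rw [hα]
          exact Submodule.smul_mem _ _ (hmem s (by lia) (by lia) _ (hzU α hα))
        · exact hxU α
      · push_cast at hα
        dsimp only
        rw [if_neg (by lia), hx0 α (by lia)]
      · push_cast at hα
        have hne : ∀ i, ∑ j, (α - Pi.single i 1 : Fin k → ℤ) j ≠ s := fun i => by
          rw [sum_sub_single]; lia
        by_cases hαs : ∑ i, α i = s
        · have e : C.tot x α = ∑ i, intSign p (∑ j ∈ Iio i, α j) •
              C.per i (α i) (x (α - Pi.single i 1)) := by
            rw [C.tot_apply, hx0 α (by lia), map_zero, smul_zero, zero_add]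
          rw [C.tot_apply]
          simp only [hαs, hne, if_true, if_false, map_smul, smul_smul, intSign_mul_self, one_smul]
          rw [← e, hd, hdz α hαs, map_zero, sub_zero, hz, sub_add_cancel]
        · rw [← hxt α (by lia)]
          exact C.tot_congr (by simp [hαs]) fun i => by simp only [hne, if_false]
  obtain ⟨x, h1, h2, h3⟩ := main (N + 1) le_rfl
  exact ⟨x, h1, fun α hα => h2 α (by push_cast; lia), fun α hα => h3 α (by push_cast; lia)⟩

end EquivComplex

/-- Chains of ordered simplices, given by the lists of their vertices. -/
abbrev ListChain (F V : Type*) [CommRing F] := List V →₀ F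

namespace ListChain

variable {F V W : Type*} [CommRing F]

theorem induction_supported {s : Set (List V)} {P : ListChain F V → Prop}
    (h0 : P 0) (hadd : ∀ x y, P x → P y → P (x + y))
    (hsingle : ∀ l ∈ s, ∀ c, P (Finsupp.single l c))
    {c : ListChain F V} (hc : c ∈ Finsupp.supported F F s) : P c := by
  rw [← Finsupp.sum_single c]
  exact Finset.sum_induction _ P hadd h0 fun i hi => hsingle i (hc hi) _

/-- Two linear maps that agree on the simplices of a chain agree on that chain. -/
theorem map_eq_map {M : Type*} [AddCommGroup M] [Module F M] {φ ψ : ListChain F V →ₗ[F] M}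
    {s : Set (List V)} (h : ∀ l ∈ s, φ (Finsupp.single l 1) = ψ (Finsupp.single l 1))
    {c : ListChain F V} (hc : c ∈ Finsupp.supported F F s) : φ c = ψ c := by
  refine induction_supported (P := fun c => φ c = ψ c) (by simp) (fun x y hx hy => by simp [hx, hy])
    (fun l hl c => ?_) hc
  rw [← mul_one c, ← smul_eq_mul, ← Finsupp.smul_single, map_smul, map_smul, h l hl]

/-- A linear map sends a chain to a submodule if it does so for the simplices of that chain. -/
theorem map_mem {M : Type*} [AddCommGroup M] [Module F M] {φ : ListChain F V →ₗ[F] M}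
    {P : Submodule F M} {s : Set (List V)} (h : ∀ l ∈ s, φ (Finsupp.single l 1) ∈ P)
    {c : ListChain F V} (hc : c ∈ Finsupp.supported F F s) : φ c ∈ P := by
  refine induction_supported (P := fun c => φ c ∈ P) (by simp)
    (fun x y hx hy => by rw [map_add]; exact P.add_mem hx hy) (fun l hl c => ?_) hc
  rw [← mul_one c, ← smul_eq_mul, ← Finsupp.smul_single, map_smul]
  exact P.smul_mem _ (h l hl)

theorem mem_supported_univ (c : ListChain F V) : c ∈ Finsupp.supported F F Set.univ := by
  simp [Finsupp.supported_univ]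

/-- The cone over a chain. -/
noncomputable def cone (v : V) : ListChain F V →ₗ[F] ListChain F V :=
  Finsupp.lmapDomain F F (List.cons v)

@[simp] theorem cone_single (v : V) (l : List V) (c : F) :
    cone v (Finsupp.single l c) = Finsupp.single (v :: l) c := by
  simp [cone]

/-- The boundary of an ordered simplex. -/
noncomputable def bdList (F : Type*) {V : Type*} [CommRing F] : List V → ListChain F V
  | [] => 0
  | v :: l => Finsupp.single l 1 - cone v (bdList F l)

/-- The (augmented) boundary operator. -/
noncomputable def bd (F V : Type*) [CommRing F] : ListChain F V →ₗ[F] ListChain F V :=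
  Finsupp.linearCombination F (bdList F)

@[simp] theorem bd_single (l : List V) : bd F V (Finsupp.single l 1) = bdList F l := by
  simp [bd]

theorem bd_cone (v : V) (x : ListChain F V) : bd F V (cone v x) = x - cone v (bd F V x) := by
  refine map_eq_map (φ := bd F V ∘ₗ cone v) (ψ := LinearMap.id - cone v ∘ₗ bd F V)
    (fun l _ => ?_) (mem_supported_univ x)
  simp [bdList]

theorem bd_bdList (l : List V) : bd F V (bdList F l) = 0 := by
  induction l with
  | nil => simp [bdList]
  | cons v l ih => simp [bdList, bd_cone, ih]

theorem bd_bd (x : ListChain F V) : bd F V (bd F V x) = 0 :=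
  map_eq_map (φ := bd F V ∘ₗ bd F V) (ψ := 0) (fun l _ => by simp [bd_bdList])
    (mem_supported_univ x)

/-- The chain map induced by a map of vertices. -/
noncomputable def push (F : Type*) [CommRing F] (σ : V → W) : ListChain F V →ₗ[F] ListChain F W :=
  Finsupp.lmapDomain F F (List.map σ)

@[simp] theorem push_single (σ : V → W) (l : List V) (c : F) :
    push F σ (Finsupp.single l c) = Finsupp.single (l.map σ) c := by
  simp [push]

theorem push_cone (σ : V → W) (v : V) (x : ListChain F V) :
    push F σ (cone v x) = cone (σ v) (push F σ x) :=
  map_eq_map (φ := push F σ ∘ₗ cone v) (ψ := cone (σ v) ∘ₗ push F σ) (fun l _ => by simp)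
    (mem_supported_univ x)

theorem push_bdList (σ : V → W) (l : List V) : push F σ (bdList F l) = bdList F (l.map σ) := by
  induction l with
  | nil => simp [bdList]
  | cons v l ih => simp [bdList, push_cone, ih]

theorem bd_push (σ : V → W) (x : ListChain F V) :
    bd F W (push F σ x) = push F σ (bd F V x) :=
  map_eq_map (φ := bd F W ∘ₗ push F σ) (ψ := push F σ ∘ₗ bd F V) (fun l _ => by simp [push_bdList])
    (mem_supported_univ x)

theorem cone_mem_supported {s t : Set (List V)} {v : V} (h : ∀ l ∈ s, v :: l ∈ t)
    {c : ListChain F V} (hc : c ∈ Finsupp.supported F F s) :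
    cone v c ∈ Finsupp.supported F F t :=
  map_mem (fun l hl => by rw [cone_single]; exact Finsupp.single_mem_supported _ _ (h l hl)) hc

theorem push_mem_supported {s : Set (List V)} {t : Set (List W)} {σ : V → W}
    (h : ∀ l ∈ s, l.map σ ∈ t) {c : ListChain F V} (hc : c ∈ Finsupp.supported F F s) :
    push F σ c ∈ Finsupp.supported F F t :=
  map_mem (fun l hl => by rw [push_single]; exact Finsupp.single_mem_supported _ _ (h l hl)) hc

theorem bdList_mem_supported (l : List V) : bdList F l ∈
    Finsupp.supported F F {l' | l'.Sublist l ∧ l'.length + 1 = l.length} := by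
  induction l with
  | nil => simp [bdList]
  | cons v l ih =>
    refine Submodule.sub_mem _ (Finsupp.single_mem_supported _ _ (by simp))
      (cone_mem_supported (fun l' hl' => ?_) ih)
    simpa using hl'

section Subdivision

variable [AddCommGroup V] [Module ℝ V] [AddCommGroup W] [Module ℝ W]

/-- The barycenter of a list of points. -/
noncomputable def barycenter (l : List V) : V := (l.length : ℝ)⁻¹ • l.sum

theorem barycenter_map (σ : V →ₗ[ℝ] W) (l : List V) :
    barycenter (l.map σ) = σ (barycenter l) := by
  simp [barycenter, map_list_sum]

/-- Barycentric subdivision in a single degree. -/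
noncomputable def sdDeg (F V : Type*) [CommRing F] [AddCommGroup V] [Module ℝ V] :
    ℕ → ListChain F V →ₗ[F] ListChain F V
  | 0 => LinearMap.id
  | n + 1 => Finsupp.linearCombination F fun l => cone (barycenter l) (sdDeg F V n (bdList F l))

/-- Barycentric subdivision. -/
noncomputable def sd (F V : Type*) [CommRing F] [AddCommGroup V] [Module ℝ V] :
    ListChain F V →ₗ[F] ListChain F V :=
  Finsupp.linearCombination F fun l => sdDeg F V l.length (Finsupp.single l 1)

theorem sd_single (l : List V) :
    sd F V (Finsupp.single l 1) = sdDeg F V l.length (Finsupp.single l 1) := by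
  simp [sd]

theorem sd_eq_sdDeg {n : ℕ} {c : ListChain F V}
    (hc : c ∈ Finsupp.supported F F {l | l.length = n}) : sd F V c = sdDeg F V n c :=
  map_eq_map (fun l hl => by rw [sd_single, hl]) hc

theorem sd_bdList {n : ℕ} {l : List V} (hl : l.length = n + 1) :
    sd F V (bdList F l) = sdDeg F V n (bdList F l) :=
  sd_eq_sdDeg (Finsupp.supported_mono (fun l' hl' => by
    have := hl'.2
    simp only [Set.mem_ofPred_eq]
    lia) (bdList_mem_supported l))

theorem sd_single_cons {n : ℕ} {l : List V} (hl : l.length = n + 1) :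
    sd F V (Finsupp.single l 1) = cone (barycenter l) (sd F V (bdList F l)) := by
  rw [sd_single, sd_bdList hl, hl]
  simp [sdDeg]

theorem bd_sd_single (n : ℕ) (l : List V) (hl : l.length = n) :
    bd F V (sd F V (Finsupp.single l 1)) = sd F V (bdList F l) := by
  induction n generalizing l with
  | zero =>
    rw [List.length_eq_zero_iff] at hl
    subst hl
    simp [sd, sdDeg, bdList]
  | succ n ih =>
    have h : bd F V (sd F V (bdList F l)) = sd F V (bd F V (bdList F l)) :=
      map_eq_map (φ := bd F V ∘ₗ sd F V) (ψ := sd F V ∘ₗ bd F V)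
        (fun l' hl' => by simpa using ih l' (by have := hl'.2; lia)) (bdList_mem_supported l)
    rw [sd_single_cons hl, bd_cone, h, bd_bdList, map_zero, map_zero, sub_zero]

theorem bd_sd (c : ListChain F V) : bd F V (sd F V c) = sd F V (bd F V c) :=
  map_eq_map (φ := bd F V ∘ₗ sd F V) (ψ := sd F V ∘ₗ bd F V)
    (fun l _ => by simpa using bd_sd_single _ l rfl) (mem_supported_univ c)

theorem sd_push_single (σ : V →ₗ[ℝ] W) (n : ℕ) (l : List V) (hl : l.length = n) :
    sd F W (push F σ (Finsupp.single l 1)) = push F σ (sd F V (Finsupp.single l 1)) := by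
  induction n generalizing l with
  | zero =>
    rw [List.length_eq_zero_iff] at hl
    subst hl
    simp [sd, sdDeg]
  | succ n ih =>
    have h : sd F W (push F σ (bdList F l)) = push F σ (sd F V (bdList F l)) :=
      map_eq_map (φ := sd F W ∘ₗ push F σ) (ψ := push F σ ∘ₗ sd F V)
        (fun l' hl' => ih l' (by have := hl'.2; lia)) (bdList_mem_supported l)
    rw [push_single, sd_single_cons hl, sd_single_cons (l := l.map σ) (by simpa using hl),
      push_cone, ← h, push_bdList, barycenter_map]

theorem sd_push (σ : V →ₗ[ℝ] W) (c : ListChain F V) :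
    sd F W (push F σ c) = push F σ (sd F V c) :=
  map_eq_map (φ := sd F W ∘ₗ push F σ) (ψ := push F σ ∘ₗ sd F V)
    (fun l _ => sd_push_single σ _ l rfl) (mem_supported_univ c)

end Subdivision

section Mesh

variable [NormedAddCommGroup V] [NormedSpace ℝ V]

/-- The lists of length `n` with all entries in `A` and at mutual distances at most `D`. -/
def smallLists (n : ℕ) (A : Set V) (D : ℝ) : Set (List V) :=
  {l | l.length = n ∧ (∀ v ∈ l, v ∈ A) ∧ ∀ v ∈ l, ∀ w ∈ l, dist v w ≤ D}

theorem barycenter_mem {A : Set V} (hA : Convex ℝ A) {l : List V} (hl : l ≠ [])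
    (h : ∀ v ∈ l, v ∈ A) : barycenter l ∈ A := by
  have hlen : (l.length : ℝ) ≠ 0 := by simpa using hl
  have e : barycenter l = ∑ i : Fin l.length, (l.length : ℝ)⁻¹ • l.get i := by
    rw [barycenter, ← Finset.smul_sum]
    congr 1
    conv_lhs => rw [← List.ofFn_get l, List.sum_ofFn]
  rw [e]
  refine hA.sum_mem (fun _ _ => by positivity) ?_ fun i _ => h _ (List.get_mem l i)
  simp [hlen]

theorem dist_barycenter_le {l : List V} {D : ℝ} {v : V} (hv : v ∈ l)
    (h : ∀ w ∈ l, dist w v ≤ D) : dist v (barycenter l) ≤ ((l.length - 1) / l.length : ℝ) * D := by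
  have hlen : (0 : ℝ) < l.length := by simpa [List.length_pos_iff] using List.ne_nil_of_mem hv
  have key : ∀ l' : List V, (∀ w ∈ l', dist w v ≤ D) →
      ‖l'.sum - (l'.length : ℝ) • v‖ ≤ l'.length * D := by
    intro l' hl'
    induction l' with
    | nil => simp
    | cons w l' ih =>
      have e : (w :: l').sum - ((w :: l').length : ℝ) • v =
          (w - v) + (l'.sum - (l'.length : ℝ) • v) := by
        simp [add_smul]; abel
      rw [e]
      have h1 := hl' w (by simp)
      rw [dist_eq_norm] at h1
      have h2 := ih fun u hu => hl' u (by simp [hu])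
      refine (norm_add_le _ _).trans ?_
      push_cast [List.length_cons]
      linarith
  obtain ⟨l₁, l₂, rfl⟩ := List.append_of_mem hv
  have h1 := key (l₁ ++ l₂) fun w hw => h w (by simp at hw ⊢; tauto)
  have e : barycenter (l₁ ++ v :: l₂) - v = ((l₁ ++ v :: l₂).length : ℝ)⁻¹ •
      ((l₁ ++ l₂).sum - ((l₁ ++ l₂).length : ℝ) • v) := by
    rw [eq_inv_smul_iff₀ hlen.ne', smul_sub, barycenter, smul_inv_smul₀ hlen.ne']
    simp only [List.sum_append, List.sum_cons, List.length_append, List.length_cons]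
    push_cast
    module
  rw [dist_comm, dist_eq_norm, e, norm_smul, Real.norm_of_nonneg (inv_nonneg.2 hlen.le)]
  have e2 : ((l₁ ++ v :: l₂).length : ℝ) - 1 = ((l₁ ++ l₂).length : ℝ) := by
    simp; ring
  rw [e2, div_mul_eq_mul_div, inv_mul_eq_div]
  gcongr

/-- Barycentric subdivision decreases the mesh. -/
theorem sd_single_mem {m n : ℕ} (hn : n ≤ m + 1) {D : ℝ} (hD : 0 ≤ D) {A : Set V}
    (hA : Convex ℝ A) {l : List V} (hl : l ∈ smallLists n A D) :
    sd F V (Finsupp.single l 1) ∈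
      Finsupp.supported F F (smallLists n A ((m / (m + 1) : ℝ) * D)) := by
  induction n generalizing l A with
  | zero =>
    have := List.length_eq_zero_iff.1 hl.1
    subst this
    simp only [sd_single, List.length_nil, sdDeg, LinearMap.id_apply]
    exact Finsupp.single_mem_supported _ _ (by simp [smallLists])
  | succ n ih =>
    obtain ⟨hlen, hlA, hlD⟩ := hl
    rw [sd_single_cons hlen]
    set b := barycenter l with hb
    set R : ℝ := (m / (m + 1) : ℝ) * D with hR
    have hdist : ∀ v ∈ l, dist v b ≤ R := fun v hv => by
      refine (dist_barycenter_le hv fun w hw => hlD w hw v hv).trans ?_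
      refine mul_le_mul_of_nonneg_right ?_ hD
      rw [hlen]
      have : (n : ℝ) ≤ m := by exact_mod_cast Nat.le_of_succ_le_succ hn
      rw [div_le_div_iff₀ (by positivity) (by positivity)]
      push_cast
      nlinarith
    have hmem : sd F V (bdList F l) ∈
        Finsupp.supported F F (smallLists n (A ∩ Metric.closedBall b R) R) := by
      refine map_mem (fun l' hl' => ?_) (bdList_mem_supported l)
      refine ih (by lia) (hA.inter (convex_closedBall b R)) ⟨?_, ?_, ?_⟩
      · have := hl'.2
        lia
      · exact fun v hv => ⟨hlA v (hl'.1.subset hv), hdist v (hl'.1.subset hv)⟩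
      · exact fun v hv w hw => hlD v (hl'.1.subset hv) w (hl'.1.subset hw)
    refine cone_mem_supported (fun l' hl' => ?_) hmem
    obtain ⟨h1, h2, h3⟩ := hl'
    have hR0 : 0 ≤ R := by positivity
    refine ⟨by simp [h1], ?_, ?_⟩
    · simp only [List.mem_cons, forall_eq_or_imp]
      exact ⟨barycenter_mem hA (by rintro rfl; simp at hlen) hlA, fun v hv => (h2 v hv).1⟩
    · simp only [List.mem_cons, forall_eq_or_imp, dist_self]
      exact ⟨⟨hR0, fun v hv => by rw [dist_comm]; exact (h2 v hv).2⟩,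
        fun v hv => ⟨(h2 v hv).2, fun w hw => h3 v hv w hw⟩⟩

/-- The union of the sets of small lists over a family of sets. -/
def smallIn {ι : Type*} (A : ι → Set V) (n : ℕ) (D : ℝ) : Set (List V) :=
  ⋃ i, smallLists n (A i) D

theorem sd_mem {ι : Type*} {A : ι → Set V} (hA : ∀ i, Convex ℝ (A i)) {m n : ℕ} (hn : n ≤ m + 1)
    {D : ℝ} (hD : 0 ≤ D) {c : ListChain F V} (hc : c ∈ Finsupp.supported F F (smallIn A n D)) :
    sd F V c ∈ Finsupp.supported F F (smallIn A n ((m / (m + 1) : ℝ) * D)) := by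
  refine map_mem (fun l hl => ?_) hc
  obtain ⟨i, hi⟩ := Set.mem_iUnion.1 hl
  exact Finsupp.supported_mono
    (Set.subset_iUnion (fun i => smallLists n (A i) ((m / (m + 1) : ℝ) * D)) i)
    (sd_single_mem hn hD (hA i) hi)

theorem sd_pow_mem {ι : Type*} {A : ι → Set V} (hA : ∀ i, Convex ℝ (A i)) {m n : ℕ}
    (hn : n ≤ m + 1) {D : ℝ} (hD : 0 ≤ D) {c : ListChain F V}
    (hc : c ∈ Finsupp.supported F F (smallIn A n D)) (t : ℕ) :
    (sd F V ^ t) c ∈ Finsupp.supported F F (smallIn A n ((m / (m + 1) : ℝ) ^ t * D)) := by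
  induction t with
  | zero => simpa using hc
  | succ t ih =>
    rw [pow_succ' (sd F V), Module.End.mul_apply, pow_succ', mul_assoc]
    exact sd_mem hA hn (by positivity) ih

end Mesh

section Label

open VertexAlgebra

/-- The simplicial map to the vertex algebra given by a labelling of the vertices. -/
noncomputable def label (F : Type*) [CommRing F] (lab : V → W) :
    ListChain F V →ₗ[F] VertexAlgebra F W :=
  Finsupp.linearCombination F fun l => ((l.map lab).map vx).prod

@[simp] theorem label_single (lab : V → W) (l : List V) :
    label F lab (Finsupp.single l 1) = ((l.map lab).map vx).prod := by
  simp [label]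

theorem label_cone (lab : V → W) (v : V) (c : ListChain F V) :
    label F lab (cone v c) = vx (lab v) * label F lab c :=
  map_eq_map (φ := label F lab ∘ₗ cone v) (ψ := LinearMap.mulLeft F (vx (lab v)) ∘ₗ label F lab)
    (fun l _ => by simp) (mem_supported_univ c)

theorem label_bd (lab : V → W) (c : ListChain F V) :
    label F lab (bd F V c) = bdry F W (label F lab c) := by
  refine map_eq_map (φ := label F lab ∘ₗ bd F V) (ψ := bdry F W ∘ₗ label F lab) (fun l _ => ?_)
    (mem_supported_univ c)
  simp only [LinearMap.comp_apply, bd_single, label_single]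
  induction l with
  | nil => simp [bdList, bdry_one]
  | cons v l ih => simp [bdList, label_cone, bdry_vx_mul, ih]

theorem label_push {lab : V → W} {σ : V → V} {τ : W → W} {s : Set (List V)}
    (h : ∀ l ∈ s, ∀ v ∈ l, lab (σ v) = τ (lab v)) {c : ListChain F V}
    (hc : c ∈ Finsupp.supported F F s) :
    label F lab (push F σ c) = mapVx τ (label F lab c) := by
  refine map_eq_map (φ := label F lab ∘ₗ push F σ) (ψ := (mapVx τ).toLinearMap ∘ₗ label F lab)
    (fun l hl => ?_) hc
  simp only [LinearMap.comp_apply, push_single, label_single, AlgHom.toLinearMap_apply,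
    map_list_prod, List.map_map]
  congr 1
  exact List.map_congr_left fun v hv => by simp [h l hl v hv]

end Label

end ListChain

/-- Configurations of `(ZMod p) ^ k`-indexed families of points in `ℝ ^ (N + 1)`. -/
abbrev Config (p k N : ℕ) := (Fin k → ZMod p) → Fin (N + 1) → ℝ

namespace Config

open ListChain VertexAlgebra

variable {p k N : ℕ}

/-- The action on configurations by permuting the points. -/
def shift (g : Fin k → ZMod p) : Config p k N →ₗ[ℝ] Config p k N :=
  LinearMap.funLeft ℝ (Fin (N + 1) → ℝ) fun h => h - g

@[simp] theorem shift_apply (g : Fin k → ZMod p) (x : Config p k N) (h : Fin k → ZMod p) :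
    shift g x h = x (h - g) := rfl

theorem shift_zero (x : Config p k N) : shift 0 x = x := by ext; simp

theorem shift_add (g h : Fin k → ZMod p) (x : Config p k N) :
    shift (g + h) x = shift g (shift h x) := by
  ext u; simp [sub_sub]

theorem shift_shift_neg (g : Fin k → ZMod p) (x : Config p k N) : shift g (shift (-g) x) = x := by
  rw [← shift_add, add_neg_cancel, shift_zero]

/-- The equivariant complex of chains of configurations. -/
noncomputable def chains (p k N : ℕ) : EquivComplex p k (ListChain (ZMod p) (Config p k N)) where
  d := bd _ _
  act g := push _ (shift g)
  d_d := bd_bd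
  act_zero x := map_eq_map (φ := push _ (shift 0)) (ψ := LinearMap.id)
    (fun l _ => by
      simp [show ⇑(shift 0 : Config p k N →ₗ[ℝ] _) = id from funext shift_zero])
    (mem_supported_univ x)
  act_add g h x := map_eq_map (φ := push _ (shift (g + h)))
    (ψ := push _ (shift g) ∘ₗ push _ (shift h))
    (fun l _ => by
      simp [show ⇑(shift (g + h) : Config p k N →ₗ[ℝ] _) = shift g ∘ shift h from
        funext (shift_add g h)]) (mem_supported_univ x)
  d_act g x := bd_push _ x

variable [NeZero p]

/-- The maximal faces of the complex of configurations in which no vertex is used twice. -/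
def face (γ : Fin (N + 1) → Fin k → ZMod p) : Set (Config p k N) :=
  {x | (∀ g j, 0 ≤ x g j) ∧ ∑ g, ∑ j, x g j = 1 ∧ ∀ g j, x g j ≠ 0 → γ j = g}

theorem convex_face (γ : Fin (N + 1) → Fin k → ZMod p) : Convex ℝ (face γ) := by
  intro x hx y hy a b ha hb hab
  refine ⟨fun g j => ?_, ?_, fun g j h => ?_⟩
  · have := hx.1 g j
    have := hy.1 g j
    simp only [Pi.add_apply, Pi.smul_apply, smul_eq_mul]
    positivity
  · simp only [Pi.add_apply, Pi.smul_apply, smul_eq_mul, sum_add_distrib, ← mul_sum, hx.2.1, hy.2.1,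
      mul_one, hab]
  · by_contra hne
    refine h ?_
    have h1 : x g j = 0 := by_contra fun h => hne (hx.2.2 g j h)
    have h2 : y g j = 0 := by_contra fun h => hne (hy.2.2 g j h)
    simp [h1, h2]

theorem le_one_of_mem_face {γ : Fin (N + 1) → Fin k → ZMod p} {x : Config p k N} (hx : x ∈ face γ)
    (g : Fin k → ZMod p) (j : Fin (N + 1)) : x g j ≤ 1 := by
  rw [← hx.2.1]
  exact (single_le_sum (fun j _ => hx.1 g j) (mem_univ j)).trans
    (single_le_sum (f := fun g => ∑ j, x g j) (fun g _ => sum_nonneg fun j _ => hx.1 g j)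
      (mem_univ g))

theorem dist_le_one {γ : Fin (N + 1) → Fin k → ZMod p} {x y : Config p k N} (hx : x ∈ face γ)
    (hy : y ∈ face γ) : dist x y ≤ 1 := by
  refine (dist_pi_le_iff zero_le_one).2 fun g => (dist_pi_le_iff zero_le_one).2 fun j => ?_
  rw [Real.dist_eq, abs_le]
  have := hx.1 g j
  have := hy.1 g j
  have := le_one_of_mem_face hx g j
  have := le_one_of_mem_face hy g j
  constructor <;> linarith

theorem shift_mem_face {γ : Fin (N + 1) → Fin k → ZMod p} {x : Config p k N} (hx : x ∈ face γ)
    (g : Fin k → ZMod p) : shift g x ∈ face fun j => γ j + g := by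
  refine ⟨fun h j => hx.1 _ j, ?_, fun h j hne => ?_⟩
  · rw [← hx.2.1]
    exact Equiv.sum_comp (Equiv.subRight g) fun h => ∑ j, x h j
  · show γ j + g = h
    rw [hx.2.2 _ j hne, sub_add_cancel]

/-- Lists of a given length in a face that only use the first vertices. -/
def initLists (p k N : ℕ) [NeZero p] (s : ℤ) : Set (List (Config p k N)) :=
  {l | (l.length : ℤ) = s ∧ ∃ γ, ∀ x ∈ l, x ∈ face γ ∧ ∀ g (j : Fin (N + 1)), s ≤ j → x g j = 0}

/-- A vertex configuration. -/
def vertex (p k N : ℕ) (s : ℤ) : Config p k N :=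
  fun g j => if g = 0 ∧ (j : ℤ) = s then 1 else 0

theorem vertex_mem_face {s : ℤ} (h0 : 0 ≤ s) (hs : s ≤ N) {γ : Fin (N + 1) → Fin k → ZMod p}
    (hγ : ∀ j : Fin (N + 1), (j : ℤ) = s → γ j = 0) : vertex p k N s ∈ face γ := by
  refine ⟨fun g j => ?_, ?_, fun g j h => ?_⟩
  · rw [vertex]; split_ifs <;> simp
  · obtain ⟨n, rfl⟩ := Int.eq_ofNat_of_zero_le h0
    rw [sum_eq_single 0 (fun g _ hg => by simp [vertex, hg]) (by simp),
      sum_eq_single (⟨n, by lia⟩ : Fin (N + 1)) (fun j _ hj => ?_) (by simp)]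
    · simp [vertex]
    · rw [vertex, if_neg]
      rintro ⟨-, h⟩
      exact hj (Fin.ext (by simpa using h))
  · rw [vertex] at h
    split_ifs at h with h'
    · rw [hγ j h'.2, h'.1]
    · exact absurd rfl h

theorem cons_vertex_mem_initLists {s : ℤ} (h0 : 0 ≤ s) (hs : s ≤ N) {l : List (Config p k N)}
    (hl : l ∈ initLists p k N s) : vertex p k N s :: l ∈ initLists p k N (s + 1) := by
  obtain ⟨hlen, γ, hγ⟩ := hl
  refine ⟨by simp [hlen], fun j => if (j : ℤ) = s then 0 else γ j, ?_⟩
  simp only [List.mem_cons, forall_eq_or_imp]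
  refine ⟨⟨vertex_mem_face h0 hs fun j hj => if_pos hj, fun g j hj => ?_⟩, fun x hx => ?_⟩
  · rw [vertex, if_neg]
    lia
  · obtain ⟨hx1, hx2⟩ := hγ x hx
    refine ⟨⟨hx1.1, hx1.2.1, fun g j h => ?_⟩, fun g j hj => hx2 g j (by lia)⟩
    show (if (j : ℤ) = s then 0 else γ j) = g
    rw [if_neg fun hj : (j : ℤ) = s => h (hx2 g j hj.ge)]
    exact hx1.2.2 g j h

theorem exists_family_tot (p k N : ℕ) [NeZero p] :
    ∃ x : (Fin k → ℤ) → ListChain (ZMod p) (Config p k N),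
      (∀ α, x α ∈ Finsupp.supported (ZMod p) (ZMod p) (initLists p k N (∑ i, α i + 1))) ∧
      (∀ α, ∑ i, α i < 0 ∨ (N : ℤ) < ∑ i, α i → x α = 0) ∧
      ∀ α : Fin k → ℤ, ∑ i, α i ≤ (N : ℤ) →
        (chains p k N).tot x α = if α = 0 then Finsupp.single [] 1 else 0 := by
  refine (chains p k N).exists_tot_eq
    (fun s => Finsupp.supported (ZMod p) (ZMod p) (initLists p k N s))
    (fun s => cone (vertex p k N s)) N (fun s z => bd_cone _ z)
    (fun s h0 hs z hz => cone_mem_supported (fun l hl => cons_vertex_mem_initLists h0 hs hl) hz)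
    (fun s g z hz => push_mem_supported (fun l hl => ?_) hz)
    (Finsupp.single_mem_supported _ _ ?_) (fun g => ?_) ?_
  · obtain ⟨hlen, γ, hγ⟩ := hl
    refine ⟨by simpa using hlen, fun j => γ j + g, ?_⟩
    simp only [List.mem_map, forall_exists_index, and_imp, forall_apply_eq_imp_iff₂]
    exact fun x hx => ⟨shift_mem_face (hγ x hx).1 g, fun h j hj => (hγ x hx).2 _ j hj⟩
  · exact ⟨rfl, 0, by simp⟩
  · exact push_single _ _ _
  · exact (bd_single _).trans rfl

theorem initLists_subset_smallIn {s : ℤ} {n : ℕ} (hn : (n : ℤ) = s) :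
    initLists p k N s ⊆ smallIn face n 1 := by
  rintro l ⟨hlen, γ, hγ⟩
  exact Set.mem_iUnion.2 ⟨γ, by lia, fun v hv => (hγ v hv).1,
    fun v hv w hw => dist_le_one (hγ v hv).1 (hγ w hw).1⟩

/-- There is no equivariant labelling of configurations by the vertices of lines such that no small
simplex carries all the labels of a line. -/
theorem not_exists_labelling [Fact p.Prime] {B : Type*} [Fintype B] (S : LineSystem p k B)
    (hS : ∑ j, S.deg univ j ≤ N) (lab : Config p k N → B × ZMod p)
    (hlab : ∀ γ, ∀ x ∈ face γ, ∀ g, lab (shift g x) = S.move g (lab x)) {δ : ℝ} (hδ : 0 < δ)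
    (hsmall : ∀ γ n, ∀ l ∈ smallLists n (face γ) δ, ∀ b, ∃ a, (b, a) ∉ l.map lab) : False := by
  obtain ⟨x, hx, hx0, hxt⟩ := exists_family_tot p k N
  obtain ⟨t, ht⟩ := exists_pow_lt_of_lt_one hδ (show (N / (N + 1) : ℝ) < 1 by
    rw [div_lt_one (by positivity)]; linarith)
  set L := label (ZMod p) lab ∘ₗ (sd (ZMod p) (Config p k N) ^ t) with hL
  have hsupp : ∀ α, ∃ n : ℕ, (sd (ZMod p) (Config p k N) ^ t) (x α) ∈
      Finsupp.supported (ZMod p) (ZMod p) (smallIn face n δ) := fun α => by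
    by_cases hα : ∑ i, α i < 0 ∨ (N : ℤ) < ∑ i, α i
    · exact ⟨0, by rw [hx0 α hα, map_zero]; exact Submodule.zero_mem _⟩
    · push Not at hα
      refine ⟨(∑ i, α i + 1).toNat, ?_⟩
      have h1 := Finsupp.supported_mono (M := ZMod p) (R := ZMod p)
        (initLists_subset_smallIn (by lia : (((∑ i, α i + 1).toNat : ℕ) : ℤ) = _)) (hx α)
      have hsub : smallIn (face (p := p) (k := k) (N := N)) (∑ i, α i + 1).toNat
          ((N / (N + 1) : ℝ) ^ t * 1) ⊆ smallIn face (∑ i, α i + 1).toNat δ := by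
        refine Set.iUnion_mono fun γ l hl => ⟨hl.1, hl.2.1, fun v hv w hw => ?_⟩
        exact (hl.2.2 v hv w hw).trans (by rw [mul_one]; exact ht.le)
      exact Finsupp.supported_mono hsub
        (sd_pow_mem convex_face (m := N) (by lia) zero_le_one h1 t)
  have hbd : ∀ (t : ℕ) (c : ListChain (ZMod p) (Config p k N)),
      (sd _ _ ^ t) (bd _ _ c) = bd _ _ ((sd _ _ ^ t) c) := fun t c => by
    induction t with
    | zero => simp
    | succ t ih => rw [pow_succ', Module.End.mul_apply, ih, ← bd_sd, Module.End.mul_apply]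
  have hpush : ∀ (t : ℕ) (g : Fin k → ZMod p) (c : ListChain (ZMod p) (Config p k N)),
      (sd _ _ ^ t) (push _ (shift g) c) = push _ (shift g) ((sd _ _ ^ t) c) := fun t g c => by
    induction t with
    | zero => simp
    | succ t ih => rw [pow_succ', Module.End.mul_apply, ih, sd_push, Module.End.mul_apply]
  have hnil : ∀ t : ℕ, (sd _ _ ^ t) (Finsupp.single [] 1 : ListChain (ZMod p) (Config p k N)) =
      Finsupp.single [] 1 := fun t => by
    induction t with
    | zero => simp
    | succ t ih => rw [pow_succ', Module.End.mul_apply, ih]; simp [sd, sdDeg]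
  refine S.not_exists_family_deleted (fun α => L (x α)) (fun α => ?_)
    (fun α hα => by rw [hx0 α (Or.inl hα), map_zero]) fun α hα => ?_
  · obtain ⟨n, hn⟩ := hsupp α
    refine map_mem (φ := label (ZMod p) lab) (fun l hl => ?_) hn
    obtain ⟨γ, hγ⟩ := Set.mem_iUnion.1 hl
    rw [label_single]
    refine mem_deleted.2 fun b => ?_
    obtain ⟨a, ha⟩ := hsmall γ n l hγ b
    exact ctrs_eq_zero_of_ctr ((mem_line b _).2 rfl) (ctr_list_prod ha)
  · rw [(chains p k N).tot_map S.chains L x (fun α => ?_) (fun g α => ?_) α,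
      hxt α ((sum_le_sum fun j _ => hα j).trans hS)]
    · split_ifs
      · simp [hL, hnil]
      · exact map_zero _
    · rw [hL, LinearMap.comp_apply, LinearMap.comp_apply]
      exact (congrArg _ (hbd t _)).trans (label_bd _ _)
    · rw [hL, LinearMap.comp_apply, LinearMap.comp_apply]
      obtain ⟨n, hn⟩ := hsupp α
      refine (congrArg _ (hpush t g _)).trans (label_push (fun l hl v hv => ?_) hn)
      obtain ⟨γ, hγ⟩ := Set.mem_iUnion.1 hl
      exact hlab γ v (hγ.2.1 v hv) g

end Config

namespace Config

open ListChain

variable {p k N : ℕ} [NeZero p]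

theorem isCompact_face (γ : Fin (N + 1) → Fin k → ZMod p) : IsCompact (face γ) := by
  refine Metric.isCompact_of_isClosed_isBounded ?_ ?_
  · have e : face γ = (⋂ g, ⋂ j, {x | 0 ≤ x g j}) ∩ {x | ∑ g, ∑ j, x g j = 1} ∩
        ⋂ g, ⋂ j, ⋂ _ : γ j ≠ g, {x | x g j = 0} := by
      ext x
      simp only [face, Set.mem_inter_iff, Set.mem_iInter, Set.mem_ofPred_eq, and_assoc, ne_eq,
        not_imp_comm]
    rw [e]
    refine (IsClosed.inter ?_ ?_).inter ?_
    · exact isClosed_iInter fun g => isClosed_iInter fun j =>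
        isClosed_le continuous_const (by fun_prop)
    · exact isClosed_eq (by fun_prop) continuous_const
    · exact isClosed_iInter fun g => isClosed_iInter fun j => isClosed_iInter fun _ =>
        isClosed_eq (by fun_prop) continuous_const
  · exact Metric.isBounded_iff.2 ⟨1, fun x hx y hy => dist_le_one hx hy⟩

theorem isCompact_iUnion_face : IsCompact (⋃ γ, face γ : Set (Config p k N)) :=
  isCompact_iUnion isCompact_face

theorem exists_ne_zero_of_mem_face {γ : Fin (N + 1) → Fin k → ZMod p} {x : Config p k N}
    (hx : x ∈ face γ) : ∃ j, (∑ g, x g) j ≠ 0 := by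
  by_contra! h
  have h1 := hx.2.1
  rw [sum_comm] at h1
  simp only [Finset.sum_apply] at h
  simp [h] at h1

/-- A vertex carrying positive weight. -/
noncomputable def support (x : Config p k N) : Fin (N + 1) :=
  Classical.epsilon fun j => (∑ g, x g) j ≠ 0

/-- The index of the point using the chosen vertex. -/
noncomputable def owner (x : Config p k N) : Fin k → ZMod p :=
  Classical.epsilon fun g => x g (support x) ≠ 0

theorem support_shift (g : Fin k → ZMod p) (x : Config p k N) :
    support (shift g x) = support x := by
  have : ∑ h, shift g x h = ∑ h, x h := Equiv.sum_comp (Equiv.subRight g) fun h => x h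
  rw [support, this, support]

theorem owner_eq {γ : Fin (N + 1) → Fin k → ZMod p} {x : Config p k N} (hx : x ∈ face γ) :
    owner x = γ (support x) := by
  have h1 : (∑ g, x g) (support x) ≠ 0 :=
    Classical.epsilon_spec (p := fun j => (∑ g, x g) j ≠ 0) (exists_ne_zero_of_mem_face hx)
  rw [Finset.sum_apply] at h1
  obtain ⟨g, -, hg⟩ := exists_ne_zero_of_sum_ne_zero h1
  exact (hx.2.2 _ _ (Classical.epsilon_spec (p := fun g => x g (support x) ≠ 0) ⟨g, hg⟩)).symm

theorem owner_shift {γ : Fin (N + 1) → Fin k → ZMod p} {x : Config p k N} (hx : x ∈ face γ)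
    (g : Fin k → ZMod p) : owner (shift g x) = owner x + g := by
  rw [owner_eq hx, owner_eq (shift_mem_face hx g), support_shift]

/-- An invariant relation between configurations and labels that can be satisfied at every
configuration is satisfied by an equivariant labelling. -/
theorem exists_equivariant_labelling {B : Type*} (S : LineSystem p k B)
    {Good : Config p k N → B × ZMod p → Prop} [Nonempty B]
    (hGood : ∀ g x v, Good x v → Good (shift g x) (S.move g v))
    (hex : ∀ γ, ∀ x ∈ face γ, ∃ v, Good x v) :
    ∃ lab : Config p k N → B × ZMod p,
      (∀ γ, ∀ x ∈ face γ, ∀ g, lab (shift g x) = S.move g (lab x)) ∧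
      ∀ γ, ∀ x ∈ face γ, Good x (lab x) := by
  refine ⟨fun x => S.move (owner x) (Classical.epsilon (Good (shift (-owner x) x))), ?_, ?_⟩
  · intro γ x hx g
    have e : shift (-owner (shift g x)) (shift g x) = shift (-owner x) x := by
      rw [owner_shift hx, ← shift_add]
      congr 2
      abel
    dsimp only
    rw [e, owner_shift hx, add_comm, S.move_add, Function.comp_apply]
  · intro γ x hx
    have h := hGood (owner x) _ _
      (Classical.epsilon_spec (hex _ _ (shift_mem_face hx (-owner x))))
    rwa [shift_shift_neg] at h

/-- If a continuous family of functions on the vertices of lines is nowhere constant on all lines,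
then its oscillation along lines is bounded below. -/
theorem exists_gap {B : Type*} [Fintype B] (M : Config p k N → B × ZMod p → ℝ)
    (hM : ContinuousOn M (⋃ γ, face γ))
    (hne : ∀ γ, ∀ x ∈ face γ, ∃ b a a', M x (b, a) ≠ M x (b, a')) :
    ∃ ε > 0, ∀ γ, ∀ x ∈ face γ, ∃ v : B × ZMod p,
      (∀ a, M x (v.1, a) ≤ M x v) ∧ ∃ a, M x (v.1, a) ≤ M x v - ε := by
  have hMv : ∀ v, ContinuousOn (fun x => M x v) (⋃ γ, face γ) := continuousOn_pi.1 hM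
  have hK : (⋃ γ, face γ : Set (Config p k N)).Nonempty :=
    ⟨vertex p k N 0, Set.mem_iUnion.2 ⟨0, vertex_mem_face le_rfl (by lia) fun _ _ => rfl⟩⟩
  let D : Config p k N → B × ZMod p × ZMod p → ℝ :=
    fun x w => M x (w.1, w.2.1) - M x (w.1, w.2.2)
  have hDc : ContinuousOn (fun x => ‖D x‖) (⋃ γ, face γ) :=
    (continuousOn_pi.2 fun w => (hMv _).sub (hMv _)).norm
  obtain ⟨x₀, hx₀, hmin⟩ := isCompact_iUnion_face.exists_isMinOn hK hDc
  have hpos : 0 < ‖D x₀‖ := by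
    obtain ⟨γ, hγ⟩ := Set.mem_iUnion.1 hx₀
    obtain ⟨b, a, a', h⟩ := hne γ x₀ hγ
    exact norm_pos_iff.2 fun h0 => h (sub_eq_zero.1 (congrFun h0 (b, a, a')))
  refine ⟨‖D x₀‖, hpos, fun γ x hx => ?_⟩
  obtain ⟨⟨b, a, a'⟩, h⟩ : ∃ w, ‖D x₀‖ ≤ |D x w| := by
    by_contra! h
    exact absurd ((pi_norm_lt_iff hpos).2 h) (not_lt.2 (hmin (Set.mem_iUnion.2 ⟨γ, hx⟩)))
  obtain ⟨m, hm⟩ := Finite.exists_max fun a => M x (b, a)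
  refine ⟨(b, m), hm, ?_⟩
  rcases le_abs.1 h with h | h
  · exact ⟨a', by have := hm a; dsimp only [D] at *; linarith⟩
  · exact ⟨a, by have := hm a'; dsimp only [D] at *; linarith⟩

/-- An equivariant family of functions on the vertices of the lines becomes constant on all lines
at some configuration. -/
theorem exists_forall_eq [Fact p.Prime] {B : Type*} [Fintype B] (S : LineSystem p k B)
    (hS : ∑ j, S.deg univ j ≤ N) (M : Config p k N → B × ZMod p → ℝ)
    (hM : ContinuousOn M (⋃ γ, face γ))
    (hmove : ∀ g x v, M (shift g x) (S.move g v) = M x v) :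
    ∃ γ, ∃ x ∈ face γ, ∀ b a a', M x (b, a) = M x (b, a') := by
  by_contra! hne
  obtain ⟨ε, hε, hex⟩ := exists_gap M hM hne
  have hnonempty : Nonempty B :=
    ⟨(hex 0 (vertex p k N 0) (vertex_mem_face le_rfl (by lia) fun _ _ => rfl)).choose.1⟩
  have hinv : ∀ g x v, ((∀ a, M x (v.1, a) ≤ M x v) ∧ ∃ a, M x (v.1, a) ≤ M x v - ε) →
      (∀ a, M (shift g x) ((S.move g v).1, a) ≤ M (shift g x) (S.move g v)) ∧
        ∃ a, M (shift g x) ((S.move g v).1, a) ≤ M (shift g x) (S.move g v) - ε := by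
    rintro g x v ⟨h1, a', h2⟩
    have e : ∀ a, M (shift g x) ((S.move g v).1, a) = M x (v.1, a - g (S.lev v.1)) := fun a => by
      rw [← hmove g x (v.1, _)]
      simp [LineSystem.move]
    refine ⟨fun a => ?_, a' + g (S.lev v.1), ?_⟩
    · rw [e, hmove]
      exact h1 _
    · rw [e, hmove, add_sub_cancel_right]
      exact h2
  obtain ⟨lab, hlab, hgood⟩ := exists_equivariant_labelling S
    (Good := fun x v => (∀ a, M x (v.1, a) ≤ M x v) ∧ ∃ a, M x (v.1, a) ≤ M x v - ε) hinv hex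
  have huc := isCompact_iUnion_face.uniformContinuousOn_of_continuous hM
  rw [Metric.uniformContinuousOn_iff] at huc
  obtain ⟨δ, hδ, hMδ⟩ := huc (ε / 2) (half_pos hε)
  refine not_exists_labelling S hS lab hlab (half_pos hδ) fun γ n l hl b => ?_
  by_contra! hfull
  have hx : ∀ a, ∃ x ∈ l, lab x = (b, a) := fun a => by simpa using hfull a
  choose x hxl hxlab using hx
  have hface : ∀ a, x a ∈ face γ := fun a => hl.2.1 _ (hxl a)
  obtain ⟨a, ha⟩ := (hgood γ _ (hface 0)).2
  have h1 := (hgood γ _ (hface a)).1 0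
  rw [hxlab] at ha h1
  have hclose : ∀ v, |M (x 0) v - M (x a) v| < ε / 2 := fun v => by
    rw [← Real.dist_eq]
    exact (dist_le_pi_dist _ _ v).trans_lt (hMδ _ (Set.mem_iUnion.2 ⟨γ, hface 0⟩) _
      (Set.mem_iUnion.2 ⟨γ, hface a⟩)
      ((hl.2.2 _ (hxl 0) _ (hxl a)).trans_lt (half_lt_self hδ)))
  have h2 := (abs_lt.1 (hclose (b, 0))).2
  have h3 := (abs_lt.1 (hclose (b, a))).1
  dsimp only at ha h1
  linarith

end Config

section Grid

variable {p k : ℕ}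

/-- The lines in direction `i` of the quotients of `(ZMod p) ^ k` by the first coordinates, taken
with multiplicity `m`. -/
abbrev GridLine (p k m : ℕ) := Σ i : Fin k, ({j : Fin k // i < j} → ZMod p) × Fin m

/-- The system of lines `GridLine p k m`. -/
def gridSystem (p k m : ℕ) : LineSystem p k (GridLine p k m) where
  lev b := b.1
  tr g b := ⟨b.1, fun j => b.2.1 j + g j, b.2.2⟩
  tr_zero b := by simp
  tr_add g h b := by simp [add_assoc, add_comm (g _)]
  lev_tr g b := rfl
  tr_single j t b h := by
    have : ∀ i : {i : Fin k // b.1 < i}, (Pi.single j t : Fin k → ZMod p) i = 0 := fun i =>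
      Pi.single_eq_of_ne (h.trans_lt i.2).ne' _
    simp [this]

theorem sum_deg_gridSystem [NeZero p] (m : ℕ) :
    ∑ j, (gridSystem p k m).deg univ j = m * (p ^ k - 1) := by
  have h1 : ∑ j, #{b : GridLine p k m | (gridSystem p k m).lev b = j} =
      Fintype.card (GridLine p k m) :=
    (card_eq_sum_card_fiberwise fun b _ => mem_univ ((gridSystem p k m).lev b)).symm
  have h2 : Fintype.card (GridLine p k m) = (∑ i ∈ range k, p ^ i) * m := by
    have h3 : ∀ i : Fin k, Fintype.card {j : Fin k // i < j} = k - 1 - i := fun i => by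
      rw [Fintype.card_subtype, ← Fin.card_Ioi i]
      congr 1
      ext
      simp
    simp only [Fintype.card_sigma, Fintype.card_prod, Fintype.card_pi, Fintype.card_fin, ZMod.card,
      prod_const, card_univ, h3, ← sum_mul]
    rw [Fin.sum_univ_eq_sum_range fun i => p ^ (k - 1 - i), sum_range_reflect fun i => p ^ i]
  simp only [LineSystem.deg, ← mul_sum]
  rw [← Nat.cast_sum, h1, h2, ← mul_geom_sum]
  push_cast
  ring

variable [NeZero p]

/-- The sum of a function over the fibre of a point of a line. -/
def lineSum (F : (Fin k → ZMod p) → ℝ) (i : Fin k) (c : {j : Fin k // i < j} → ZMod p)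
    (a : ZMod p) : ℝ :=
  ∑ g with g i = a ∧ ∀ j : {j : Fin k // i < j}, g j = c j, F g

theorem lineSum_shift (F : (Fin k → ZMod p) → ℝ) (h : Fin k → ZMod p) (i : Fin k)
    (c : {j : Fin k // i < j} → ZMod p) (a : ZMod p) :
    lineSum (fun g => F (g - h)) i (fun j => c j + h j) (a + h i) = lineSum F i c a := by
  refine sum_equiv (Equiv.subRight h) (fun g => ?_) fun g _ => rfl
  simp [sub_eq_iff_eq_add]

/-- A function whose sums along all lines are constant is itself constant. -/
theorem eq_of_lineSum_eq {F : (Fin k → ZMod p) → ℝ}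
    (hF : ∀ i c a a', lineSum F i c a = lineSum F i c a') (g g' : Fin k → ZMod p) : F g = F g' := by
  have main : ∀ t ≤ k, ∀ g g' : Fin k → ZMod p, (∀ j : Fin k, t ≤ j → g j = g' j) →
      F g = F g' := by
    intro t
    induction t with
    | zero => exact fun _ g g' h => congrArg F (funext fun j => h j (Nat.zero_le _))
    | succ t ih =>
      intro ht g g' hgg
      have hconst : ∀ u : Fin k → ZMod p, lineSum F ⟨t, ht⟩ (fun j => u j) (u ⟨t, ht⟩) =
          lineSum (fun _ => F u) ⟨t, ht⟩ (fun j => u j) (u ⟨t, ht⟩) := fun u => by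
        refine sum_congr rfl fun h hh => ih (by lia) _ _ fun j hj => ?_
        obtain ⟨h1, h2⟩ := (mem_filter.1 hh).2
        rcases hj.eq_or_lt with hj | hj
        · have : j = ⟨t, ht⟩ := Fin.ext hj.symm
          rw [this, h1]
        · exact h2 ⟨j, hj⟩
      have hg' : (fun j : {j : Fin k // (⟨t, ht⟩ : Fin k) < j} => g' j) =
          fun j : {j : Fin k // (⟨t, ht⟩ : Fin k) < j} => g j :=
        funext fun j => (hgg j j.2).symm
      have h1 := lineSum_shift (fun _ => F g') (g' - g) ⟨t, ht⟩ (fun j => g j) (g ⟨t, ht⟩)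
      have h2 := hF ⟨t, ht⟩ (fun j => g j) (g ⟨t, ht⟩) (g' ⟨t, ht⟩)
      rw [hconst g, ← hg', hconst g'] at h2
      simp only [Pi.sub_apply, add_sub_cancel] at h1
      rw [h1, hg'] at h2
      simp only [lineSum, sum_const, nsmul_eq_mul] at h2
      refine mul_left_cancel₀ ?_ h2
      rw [Nat.cast_ne_zero, ← pos_iff_ne_zero, card_pos]
      exact ⟨g, by simp⟩
  exact main k le_rfl g g' fun j hj => absurd j.2 hj.not_gt

end Grid

namespace Config

variable {p k N : ℕ} [NeZero p]

/-- A continuous map on the nonnegative orthant takes the same value on all the points of some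
configuration of points supported on disjoint sets of vertices. -/
theorem exists_forall_map_eq [Fact p.Prime] {m : ℕ} (hN : m * (p ^ k - 1) ≤ N)
    {Ψ : (Fin (N + 1) → ℝ) → Fin m → ℝ} (hΨ : ContinuousOn Ψ {y | ∀ j, 0 ≤ y j}) :
    ∃ γ, ∃ x ∈ face (p := p) (k := k) γ, ∀ g g', Ψ (x g) = Ψ (x g') := by
  have hS : ∑ j, (gridSystem p k m).deg univ j ≤ N := by
    rw [sum_deg_gridSystem]
    have h1 : 1 ≤ p ^ k := Nat.one_le_iff_ne_zero.2 (pow_ne_zero _ (NeZero.ne p))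
    zify [h1] at hN
    exact hN
  let M : Config p k N → GridLine p k m × ZMod p → ℝ :=
    fun x v => lineSum (fun g => Ψ (x g) v.1.2.2) v.1.1 v.1.2.1 v.2
  have hM : ContinuousOn M (⋃ γ, face γ) := by
    refine continuousOn_pi.2 fun v => continuousOn_finsetSum _ fun g _ => ?_
    have hg : ContinuousOn (fun x : Config p k N => x g) (⋃ γ, face γ) := by fun_prop
    refine continuousOn_pi.1 (hΨ.comp hg fun x hx => ?_) _
    obtain ⟨γ, hγ⟩ := Set.mem_iUnion.1 hx
    exact hγ.1 g
  obtain ⟨γ, x, hx, h⟩ := exists_forall_eq (gridSystem p k m) hS M hM fun g x v =>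
    lineSum_shift (fun h => Ψ (x h) v.1.2.2) g v.1.1 v.1.2.1 v.2
  exact ⟨γ, x, hx, fun g g' => funext fun e =>
    eq_of_lineSum_eq (F := fun g => Ψ (x g) e) (fun i c a a' => h ⟨i, c, e⟩ a a') g g'⟩

end Config

section Perspective

variable {ι E : Type*} [Fintype ι] [NormedAddCommGroup E] [NormedSpace ℝ E]

theorem inv_sum_smul_mem_stdSimplex {y : ι → ℝ} (hy : ∀ j, 0 ≤ y j) (h : ∑ j, y j ≠ 0) :
    (∑ j, y j)⁻¹ • y ∈ stdSimplex ℝ ι := by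
  refine ⟨fun j => mul_nonneg (inv_nonneg.2 (sum_nonneg fun j _ => hy j)) (hy j), ?_⟩
  simp only [Pi.smul_apply, smul_eq_mul, ← mul_sum]
  exact inv_mul_cancel₀ h

/-- The homogeneous extension of a continuous map on the standard simplex to the nonnegative
orthant is continuous. -/
theorem continuousOn_perspective {f : (ι → ℝ) → E} (hf : ContinuousOn f (stdSimplex ℝ ι)) :
    ContinuousOn (fun y => (∑ j, y j) • f ((∑ j, y j)⁻¹ • y)) {y : ι → ℝ | ∀ j, 0 ≤ y j} := by
  have hsum : Continuous fun y : ι → ℝ => ∑ j, y j := by fun_prop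
  obtain ⟨C, hC⟩ := (isCompact_stdSimplex ℝ ι).exists_bound_of_continuousOn hf
  intro y hy
  by_cases h0 : ∑ j, y j = 0
  · have hlim : Filter.Tendsto (fun z : ι → ℝ => |∑ j, z j| * C)
        (nhdsWithin y {y : ι → ℝ | ∀ j, 0 ≤ y j}) (nhds 0) := by
      have h1 : Continuous fun z : ι → ℝ => |∑ j, z j| * C := by fun_prop
      have h2 := (h1.tendsto y).mono_left (nhdsWithin_le_nhds (s := {y : ι → ℝ | ∀ j, 0 ≤ y j}))
      rwa [h0, abs_zero, zero_mul] at h2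
    rw [ContinuousWithinAt, h0, zero_smul]
    refine squeeze_zero_norm' ?_ hlim
    filter_upwards [self_mem_nhdsWithin] with z hz
    by_cases hz0 : ∑ j, z j = 0
    · simp [hz0]
    · rw [norm_smul, Real.norm_eq_abs]
      exact mul_le_mul_of_nonneg_left (hC _ (inv_sum_smul_mem_stdSimplex hz hz0)) (abs_nonneg _)
  · refine (continuousWithinAt_inter ((isOpen_ne.preimage hsum).mem_nhds h0)).1 ?_
    have hc : ContinuousOn (fun y : ι → ℝ => (∑ j, y j) • f ((∑ j, y j)⁻¹ • y))
        ({y | ∀ j, 0 ≤ y j} ∩ (fun y : ι → ℝ => ∑ j, y j) ⁻¹' {s | s ≠ 0}) := by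
      refine hsum.continuousOn.smul (hf.comp ?_ fun z hz => inv_sum_smul_mem_stdSimplex hz.1 hz.2)
      exact (hsum.continuousOn.inv₀ fun z hz => hz.2).smul continuousOn_id
    exact hc y ⟨hy, h0⟩

end Perspective

/-- **Topological Tverberg theorem (prime power case).** Let `r` be a prime
power and `N = (d+1)(r-1)`. For every continuous map `f` from the standard
`N`-dimensional simplex to `ℝ^d`, there exist `r` pairwise disjoint subsets
`S₁, …, S_r` of the vertex set of the simplex and a point `p ∈ ℝ^d` lying in
the image under `f` of each of the faces spanned by the `Sᵢ`. -/
theorem topological_tverberg (d r : ℕ) (hd : 1 ≤ d) (hr : IsPrimePow r)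
    (f : (Fin ((d + 1) * (r - 1) + 1) → ℝ) → EuclideanSpace ℝ (Fin d))
    (hf : ContinuousOn f (stdSimplex ℝ (Fin ((d + 1) * (r - 1) + 1)))) :
    ∃ S : Fin r → Finset (Fin ((d + 1) * (r - 1) + 1)),
      (∀ i j, i ≠ j → Disjoint (S i) (S j)) ∧
      ∃ p : EuclideanSpace ℝ (Fin d), ∀ i,
        p ∈ f '' {x ∈ stdSimplex ℝ (Fin ((d + 1) * (r - 1) + 1)) |
          ∀ j, j ∉ S i → x j = 0} := by
  obtain ⟨p, k, hp, -, rfl⟩ := (isPrimePow_nat_iff r).1 hr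
  have := Fact.mk hp
  have hcard : Fintype.card (Fin k → ZMod p) = p ^ k := by simp
  have hpersp := continuousOn_perspective hf
  obtain ⟨γ, x, hx, h⟩ := Config.exists_forall_map_eq (p := p) (k := k) (m := d + 1) le_rfl
    (Ψ := fun y => Fin.cons (∑ j, y j) fun e => ((∑ j, y j) • f ((∑ j, y j)⁻¹ • y)) e) (by
      refine continuousOn_pi.2 fun e => ?_
      refine Fin.cases ?_ (fun e => ?_) e
      · simp only [Fin.cons_zero]
        fun_prop
      · simp only [Fin.cons_succ]
        exact (EuclideanSpace.proj e).continuous.comp_continuousOn hpersp)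
  have hsum : ∀ g g', ∑ j, x g j = ∑ j, x g' j := fun g g' => by
    simpa using congrFun (h g g') 0
  have hne : ∀ g, ∑ j, x g j ≠ 0 := fun g h0 => by
    have := hx.2.1
    simp [hsum _ g, h0] at this
  have hval : ∀ g g', f ((∑ j, x g j)⁻¹ • x g) = f ((∑ j, x g' j)⁻¹ • x g') := fun g g' => by
    ext e
    have h1 := congrFun (h g g') e.succ
    simp only [Fin.cons_succ, PiLp.smul_apply, smul_eq_mul] at h1
    rw [hsum g g'] at h1
    rw [hsum g g']
    exact mul_left_cancel₀ (hne g') h1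
  let φ : Fin (p ^ k) ≃ (Fin k → ZMod p) := (Fintype.equivFinOfCardEq hcard).symm
  refine ⟨fun i => {j | γ j = φ i}, fun i j hij => disjoint_left.2 fun a ha hb => hij ?_,
    f ((∑ j, x 0 j)⁻¹ • x 0), fun i => ⟨(∑ j, x (φ i) j)⁻¹ • x (φ i), ⟨?_, fun j hj => ?_⟩,
      hval _ _⟩⟩
  · exact φ.injective ((mem_filter.1 ha).2.symm.trans (mem_filter.1 hb).2)
  · exact inv_sum_smul_mem_stdSimplex (hx.1 _) (hne _)
  · have h0 : x (φ i) j = 0 := by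
      by_contra hne
      exact hj (by simpa using hx.2.2 _ _ hne)
    simp [h0]
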